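/- arXiv:1812.10819 — 5 statements merged into one kernel-verified Lean document; each statement's English description precedes it below -/
import Mathlib

section
/- Let k be a field and α : G → Gal(L/k) a finite Galois embedding problem over k. Suppose there exists a field extension M/k such that M and L are linearly disjoint over k and the induced embedding problem α_M has a geometric Galois solution. Then there exists an intermediate field k ⊆ k₀ ⊆ M with k₀ finitely generated as a field extension of k such that the induced embedding problem α_{k₀} has a geometric Galois solution. -/
set_option synthInstance.maxHeartbeats 1000000
set_option maxHeartbeats 1000000

/-- `α_{F}` has a *geometric Galois solution*: there are an embedding `ι` of `L` into a
fixed algebraic closure of `F(T) = RatFunc F`, a finite Galois extension `E/F(T)` with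
`L·F(T) ⊆ E` (i.e. `ι '' L ⊆ E`) such that every element of `E` algebraic over `F` lies
in the compositum `L·F` (i.e. `E ∩ F̄ = L·F`), and an isomorphism `β : Gal(E/F(T)) ≃ G`
such that every `σ ∈ Gal(E/F(T))` maps (the copy of) `L` onto itself and
`σ|_L = α (β σ)`. -/
def HasGeomGaloisSolution (k : Type) [Field k] (G : Type) [Group G]
    (L : Type) [Field L] [Algebra k L] (α : G →* (L ≃ₐ[k] L))
    (F : Type) [Field F] [Algebra k F] : Prop :=
  letI : Algebra k (AlgebraicClosure (RatFunc F)) :=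
    ((algebraMap (RatFunc F) (AlgebraicClosure (RatFunc F))).comp
      ((algebraMap F (RatFunc F)).comp (algebraMap k F))).toAlgebra
  ∃ (ι : L →ₐ[k] AlgebraicClosure (RatFunc F))
    (E : IntermediateField (RatFunc F) (AlgebraicClosure (RatFunc F)))
    (hE : ∀ x : L, ι x ∈ E),
    FiniteDimensional (RatFunc F) E ∧ IsGalois (RatFunc F) E ∧
    (∀ z : AlgebraicClosure (RatFunc F), z ∈ E → IsAlgebraic F z →
      z ∈ IntermediateField.adjoin F (Set.range ι)) ∧
    ∃ β : (E ≃ₐ[RatFunc F] E) ≃* G,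
      ∀ (σ : E ≃ₐ[RatFunc F] E) (x : L),
        ((σ ⟨ι x, hE x⟩ : E) : AlgebraicClosure (RatFunc F)) = ι (α (β σ) x)

open Polynomial in
theorem aux_gal {K₀ K E : Type} [Field K₀] [Field K] [Field E] [Algebra K₀ K] [Algebra K E]
    [Algebra K₀ E] [IsScalarTower K₀ K E] [FiniteDimensional K E] [IsGalois K E] (θ : E)
    (hθ : IntermediateField.adjoin K {θ} = ⊤) (f : K₀[X])
    (hf : f.map (algebraMap K₀ K) = minpoly K θ)
    (hσ : ∀ σ : E ≃ₐ[K] E, σ θ ∈ IntermediateField.adjoin K₀ {θ}) :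
    FiniteDimensional K₀ (IntermediateField.adjoin K₀ {θ}) ∧
    IsGalois K₀ (IntermediateField.adjoin K₀ {θ}) ∧
    ∃ e : (E ≃ₐ[K] E) ≃* (IntermediateField.adjoin K₀ {θ} ≃ₐ[K₀] IntermediateField.adjoin K₀ {θ}),
      ∀ σ b, ((e σ b : IntermediateField.adjoin K₀ {θ}) : E) = σ b := by
  have hint : IsIntegral K θ := Algebra.IsIntegral.isIntegral θ
  have hmon : f.Monic := by
    apply Polynomial.monic_of_injective (algebraMap K₀ K).injective
    rw [hf]; exact minpoly.monic hint
  have hirr : Irreducible f := by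
    apply hmon.irreducible_of_irreducible_map (algebraMap K₀ K)
    rw [hf]; exact minpoly.irreducible hint
  have hroot : aeval θ f = 0 := by
    rw [← Polynomial.aeval_map_algebraMap K, hf, minpoly.aeval]
  have hmin : f = minpoly K₀ θ := minpoly.eq_of_irreducible_of_monic hirr hroot hmon
  have hint0 : IsIntegral K₀ θ := ⟨f, hmon, hroot⟩
  have hfd : FiniteDimensional K₀ (IntermediateField.adjoin K₀ {θ}) :=
    IntermediateField.adjoin.finiteDimensional hint0
  have hrank : Module.finrank K₀ (IntermediateField.adjoin K₀ {θ}) = Nat.card (E ≃ₐ[K] E) := by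
    rw [IntermediateField.adjoin.finrank hint0, ← hmin, IsGalois.card_aut_eq_finrank,
      ← IntermediateField.finrank_top', ← hθ, IntermediateField.adjoin.finrank hint, ← hf,
      Polynomial.natDegree_map]
  have hst : ∀ (σ : E ≃ₐ[K] E) (x : E), x ∈ IntermediateField.adjoin K₀ {θ} →
      σ x ∈ IntermediateField.adjoin K₀ {θ} := by
    intro σ x hx
    have : IntermediateField.adjoin K₀ {θ} ≤ (IntermediateField.adjoin K₀ {θ}).comap
        ((σ : E →ₐ[K] E).restrictScalars K₀) := by
      rw [IntermediateField.adjoin_le_iff]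
      rintro _ rfl
      exact hσ σ
    exact this hx
  let r : (E ≃ₐ[K] E) →* (IntermediateField.adjoin K₀ {θ} →ₐ[K₀] IntermediateField.adjoin K₀ {θ}) :=
    { toFun := fun σ => (((σ : E →ₐ[K] E).restrictScalars K₀).comp
        (IntermediateField.adjoin K₀ {θ}).val).codRestrict
          (IntermediateField.adjoin K₀ {θ}).toSubalgebra (fun x => hst σ x x.2)
      map_one' := by ext; rfl
      map_mul' := by intros; ext; rfl }
  have hr : ∀ σ b, ((r σ b : IntermediateField.adjoin K₀ {θ}) : E) = σ b := fun _ _ => rfl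
  let r' := ((Algebra.IsAlgebraic.algEquivEquivAlgHom K₀
    (IntermediateField.adjoin K₀ {θ})).symm.toMonoidHom).comp r
  have hr' : ∀ σ b, ((r' σ b : IntermediateField.adjoin K₀ {θ}) : E) = σ b := fun _ _ => rfl
  have hinj : Function.Injective r' := by
    intro σ τ h
    have h1 : σ θ = τ θ := by
      rw [← hr' σ ⟨θ, IntermediateField.mem_adjoin_simple_self K₀ θ⟩, h, hr']
    have h2 : (σ : E →ₐ[K] E) = τ := by
      have : IntermediateField.adjoin K {θ} ≤ IntermediateField.mk
         (AlgHom.equalizer (σ : E →ₐ[K] E) τ) (by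
          intro x hx
          have hx' : σ x = τ x := hx
          change σ _ = τ _
          rw [map_inv₀, map_inv₀, hx']) := by
        rw [IntermediateField.adjoin_le_iff]
        rintro _ rfl
        exact h1
      rw [hθ] at this
      ext x
      exact this (IntermediateField.mem_top : x ∈ _)
    ext x
    exact DFunLike.congr_fun h2 x
  have hc1 : Nat.card (E ≃ₐ[K] E) ≤ Nat.card
      (IntermediateField.adjoin K₀ {θ} ≃ₐ[K₀] IntermediateField.adjoin K₀ {θ}) :=
    Nat.card_le_card_of_injective r' hinj
  have hc2 : Nat.card
      (IntermediateField.adjoin K₀ {θ} ≃ₐ[K₀] IntermediateField.adjoin K₀ {θ}) ≤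
      Nat.card (E ≃ₐ[K] E) := by
    rw [← hrank, Nat.card_eq_fintype_card]
    exact AlgEquiv.card_le
  have hbij : Function.Bijective r' :=
    (Nat.bijective_iff_injective_and_card r').2 ⟨hinj, le_antisymm hc1 hc2⟩
  refine ⟨hfd, IsGalois.of_card_aut_eq_finrank _ _ ?_, MulEquiv.ofBijective r' hbij, hr'⟩
  rw [hrank]; exact le_antisymm hc2 hc1

open Polynomial in
theorem aux_psi {F M : Type} [Field F] [Field M] (φ : F →+* M) :
    ∃ ψ : RatFunc F →+* RatFunc M, ∀ p : F[X],
      ψ (algebraMap F[X] (RatFunc F) p) = algebraMap M[X] (RatFunc M) (p.map φ) := by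
  have hinj : Function.Injective
      ((algebraMap M[X] (RatFunc M)).comp (Polynomial.mapRingHom φ)) :=
    (RatFunc.algebraMap_injective M).comp (Polynomial.map_injective φ φ.injective)
  exact ⟨IsFractionRing.lift hinj, fun p => IsFractionRing.lift_algebraMap hinj p⟩

open Polynomial in
theorem aux_const {F M : Type} [Field F] [Field M] (φ : F →+* M)
    (ψ : RatFunc F →+* RatFunc M) (hψ : ∀ p : F[X],
      ψ (algebraMap F[X] (RatFunc F) p) = algebraMap M[X] (RatFunc M) (p.map φ))
    (r : RatFunc F) (m : M) (h : ψ r = RatFunc.C m) : ∃ a, φ a = m := by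
  have h0 : algebraMap F[X] (RatFunc F) r.denom ≠ 0 := RatFunc.algebraMap_ne_zero r.denom_ne_zero
  have h1 : algebraMap F[X] (RatFunc F) r.num = r * algebraMap F[X] (RatFunc F) r.denom := by
    conv_rhs => enter [1]; rw [← RatFunc.num_div_denom r]
    field_simp
  have h2 := congrArg ψ h1
  rw [map_mul, hψ, hψ, h, ← RatFunc.algebraMap_C, ← map_mul] at h2
  have h3 := RatFunc.algebraMap_injective M h2
  have h4 := congrArg (fun q => Polynomial.coeff q r.denom.natDegree) h3
  simp only [coeff_map, coeff_C_mul] at h4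
  rw [Polynomial.coeff_natDegree, (RatFunc.monic_denom r).leadingCoeff, map_one, mul_one] at h4
  exact ⟨_, h4⟩

open Polynomial in
theorem aux_fg {k M : Type} [Field k] [Field M] [Algebra k M] (S : Set (RatFunc M))
    (hS : S.Finite) : ∃ k₀ : IntermediateField k M, k₀.FG ∧ ∃ ψ : RatFunc k₀ →+* RatFunc M,
      (∀ p : k₀[X], ψ (algebraMap k₀[X] (RatFunc k₀) p) =
        algebraMap M[X] (RatFunc M) (p.map (algebraMap k₀ M))) ∧ S ⊆ Set.range ψ := by
  let T : Set M := ⋃ s ∈ S, ((s.num.coeffs : Set M) ∪ (s.denom.coeffs : Set M))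
  have hT : T.Finite := hS.biUnion fun s _ =>
    (Finset.finite_toSet _).union (Finset.finite_toSet _)
  refine ⟨IntermediateField.adjoin k T, IntermediateField.fg_adjoin_of_finite hT, ?_⟩
  obtain ⟨ψ, hψ⟩ := aux_psi (algebraMap (IntermediateField.adjoin k T) M)
  refine ⟨ψ, hψ, ?_⟩
  have key : ∀ p : M[X], (p.coeffs : Set M) ⊆ T →
      ∃ q : (IntermediateField.adjoin k T)[X],
        q.map (algebraMap (IntermediateField.adjoin k T) M) = p := by
    intro p hp
    rw [← Polynomial.mem_lifts, Polynomial.lifts_iff_coeff_lifts]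
    intro n
    by_cases h : p.coeff n = 0
    · rw [h]; exact ⟨0, map_zero _⟩
    · exact ⟨⟨_, IntermediateField.subset_adjoin k T (hp (Polynomial.coeff_mem_coeffs h))⟩, rfl⟩
  intro s hs
  obtain ⟨a, ha⟩ := key s.num (fun x hx => Set.mem_biUnion hs (Or.inl hx))
  obtain ⟨b, hb⟩ := key s.denom (fun x hx => Set.mem_biUnion hs (Or.inr hx))
  refine ⟨algebraMap _ _ a / algebraMap _ _ b, ?_⟩
  rw [map_div₀, hψ, hψ, ha, hb, RatFunc.num_div_denom]

open Polynomial in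
theorem aux_out (k : Type) [Field k] (G : Type) [Group G]
    (L : Type) [Field L] [Algebra k L] (α : G →* (L ≃ₐ[k] L))
    (F : Type) [Field F] [Algebra k F]
    {n : Type} [Fintype n] (e : n → L)
    (B : Type) [Field B] [Algebra (RatFunc F) B] [FiniteDimensional (RatFunc F) B]
    [IsGalois (RatFunc F) B] (ι : L →+* B)
    (hι : ∀ x : k, ι (algebraMap k L x) =
      algebraMap (RatFunc F) B (RatFunc.C (algebraMap k F x)))
    (geo : ∀ z : B, (∃ p : F[X], p ≠ 0 ∧
        p.eval₂ ((algebraMap (RatFunc F) B).comp RatFunc.C) z = 0) →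
      ∃ m : n → F, z = ∑ i, algebraMap (RatFunc F) B (RatFunc.C (m i)) * ι (e i))
    (β : (B ≃ₐ[RatFunc F] B) ≃* G)
    (hβ : ∀ (σ : B ≃ₐ[RatFunc F] B) (x : L), σ (ι x) = ι (α (β σ) x)) :
    HasGeomGaloisSolution k G L α F := by
  unfold HasGeomGaloisSolution
  let this : Algebra k (AlgebraicClosure (RatFunc F)) :=
    ((algebraMap (RatFunc F) (AlgebraicClosure (RatFunc F))).comp
      ((algebraMap F (RatFunc F)).comp (algebraMap k F))).toAlgebra
  let j : B →ₐ[RatFunc F] AlgebraicClosure (RatFunc F) := IsAlgClosed.lift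
  let J : B ≃ₐ[RatFunc F] j.fieldRange := AlgEquiv.ofInjectiveField j
  have hJ : ∀ b, ((J b : j.fieldRange) : AlgebraicClosure (RatFunc F)) = j b := fun _ => rfl
  let ι' : L →ₐ[k] AlgebraicClosure (RatFunc F) :=
    { (j : B →+* AlgebraicClosure (RatFunc F)).comp ι with
      commutes' := by
        intro x
        change j (ι (algebraMap k L x)) = _
        rw [hι, j.commutes]
        rfl }
  have hι' : ∀ x, ι' x = j (ι x) := fun _ => rfl
  refine ⟨ι', j.fieldRange, fun x => ⟨ι x, rfl⟩, ?_, ?_, ?_, ?_⟩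
  · exact J.toLinearEquiv.finiteDimensional
  · exact IsGalois.of_algEquiv J
  · rintro _ ⟨z, rfl⟩ ⟨p, hp0, hp⟩
    obtain ⟨m, hm⟩ := geo z ⟨p, hp0, by
      apply j.toRingHom.injective
      rw [map_zero, ← hp, Polynomial.hom_eval₂, Polynomial.aeval_def]
      congr 1
      ext x
      exact j.commutes _⟩
    change j z ∈ _
    rw [hm, map_sum]
    refine sum_mem fun i _ => ?_
    rw [map_mul, j.commutes]
    refine mul_mem ?_ (IntermediateField.subset_adjoin F _ ⟨e i, rfl⟩)
    exact (IntermediateField.adjoin F (Set.range ι')).algebraMap_mem (m i)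
  · refine ⟨(AlgEquiv.autCongr J.symm).trans β, ?_⟩
    intro σ x
    have h1 := hβ (AlgEquiv.autCongr J.symm σ) x
    change _ = j (ι (α (β (AlgEquiv.autCongr J.symm σ)) x))
    rw [← h1]
    change _ = ((J (J.symm (σ (J (ι x)))) : j.fieldRange) : AlgebraicClosure (RatFunc F))
    rw [J.apply_symm_apply]
    rfl

open Polynomial in
theorem aux_in (k : Type) [Field k] (G : Type) [Group G]
    (L : Type) [Field L] [Algebra k L] (α : G →* (L ≃ₐ[k] L))
    (F : Type) [Field F] [Algebra k F] [FiniteDimensional k L]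
    {n : Type} [Fintype n] (e : Module.Basis n k L)
    (h : HasGeomGaloisSolution k G L α F) :
    ∃ (B : Type) (_ : Field B) (_ : Algebra (RatFunc F) B) (_ : FiniteDimensional (RatFunc F) B)
    (_ : IsGalois (RatFunc F) B) (ι : L →+* B),
    (∀ x : k, ι (algebraMap k L x) =
      algebraMap (RatFunc F) B (RatFunc.C (algebraMap k F x))) ∧
    (∀ z : B, (∃ p : F[X], p ≠ 0 ∧
        p.eval₂ ((algebraMap (RatFunc F) B).comp RatFunc.C) z = 0) →
      ∃ m : n → F, z = ∑ i, algebraMap (RatFunc F) B (RatFunc.C (m i)) * ι (e i)) ∧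
    ∃ (β : (B ≃ₐ[RatFunc F] B) ≃* G),
    (∀ (σ : B ≃ₐ[RatFunc F] B) (x : L), σ (ι x) = ι (α (β σ) x)) := by
  unfold HasGeomGaloisSolution at h
  let this : Algebra k (AlgebraicClosure (RatFunc F)) :=
    ((algebraMap (RatFunc F) (AlgebraicClosure (RatFunc F))).comp
      ((algebraMap F (RatFunc F)).comp (algebraMap k F))).toAlgebra
  obtain ⟨ι, E, hE, hfd, hgal, geo, β, hβ⟩ := h
  have htow : @IsScalarTower k F (AlgebraicClosure (RatFunc F)) _ _ this.toSMul := @IsScalarTower.of_algebraMap_eq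
    _ _ _ _ _ _ _ _ this (fun x => rfl)
  refine ⟨E, inferInstance, inferInstance, hfd, hgal,
    (ι : L →+* AlgebraicClosure (RatFunc F)).codRestrict E.toSubfield hE, ?_, ?_, β, ?_⟩
  · intro x
    apply Subtype.ext
    exact ι.commutes x
  · rintro z ⟨p, hp0, hp⟩
    have halg : IsAlgebraic F (z : AlgebraicClosure (RatFunc F)) := by
      refine ⟨p, hp0, ?_⟩
      have := congrArg E.val hp
      rw [map_zero] at this
      rw [← this]
      change _ = E.val.toRingHom _
      rw [Polynomial.hom_eval₂, Polynomial.aeval_def]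
      rfl
    have h1 := geo z z.2 halg
    have h2 : (z : AlgebraicClosure (RatFunc F)) ∈ Submodule.span F (Set.range (fun i => ι (e i))) := by
      rw [← IntermediateField.mem_toSubalgebra,
        IntermediateField.adjoin_toSubalgebra_of_isAlgebraic, ← Subalgebra.mem_toSubmodule,
        Algebra.adjoin_eq_span] at h1
      · refine (Submodule.span_le.2 ?_) h1
        have hcl : Submonoid.closure (Set.range ι) ≤
            MonoidHom.mrange (ι : L →* AlgebraicClosure (RatFunc F)) := by
          rw [Submonoid.closure_le]
          rintro _ ⟨x, rfl⟩
          exact ⟨x, rfl⟩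
        intro y hy
        obtain ⟨x, rfl⟩ := hcl hy
        change ι x ∈ _
        rw [← e.sum_repr x, map_sum]
        refine sum_mem fun i _ => ?_
        have hc : ι (algebraMap k L (e.repr x i)) =
            algebraMap F (AlgebraicClosure (RatFunc F)) (algebraMap k F (e.repr x i)) :=
          ι.commutes _
        rw [Algebra.smul_def, map_mul, hc, ← Algebra.smul_def]
        exact Submodule.smul_mem _ _ (Submodule.subset_span ⟨i, rfl⟩)
      · rintro _ ⟨x, rfl⟩
        have h6 : IsAlgebraic k x := Algebra.IsAlgebraic.isAlgebraic x
        exact (h6.algHom ι).tower_top F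
    obtain ⟨m, hm⟩ := (Submodule.mem_span_range_iff_exists_fun F).1 h2
    refine ⟨m, ?_⟩
    apply Subtype.ext
    rw [← hm]
    change _ = E.val _
    rw [map_sum]
    refine Finset.sum_congr rfl fun i _ => ?_
    rw [map_mul, Algebra.smul_def]
    rfl
  · intro σ x
    apply Subtype.ext
    exact hβ σ x

open Polynomial in
theorem aux_main (k : Type) [Field k] (G : Type) [Group G] [Finite G]
    (L : Type) [Field L] [Algebra k L] [FiniteDimensional k L] [IsGalois k L]
    (α : G →* (L ≃ₐ[k] L)) (hα : Function.Surjective α)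
    (M : Type) [Field M] [Algebra k M]
    (hM : HasGeomGaloisSolution k G L α M) :
    ∃ k₀ : IntermediateField k M, k₀.FG ∧ HasGeomGaloisSolution k G L α k₀ := by
  classical
  let e := Module.finBasis k L
  obtain ⟨E, _, _, _, _, ι, hι, geo, β, hβ⟩ := aux_in k G L α M e hM
  obtain ⟨θ, hθ⟩ := Field.exists_primitive_element (RatFunc M) E
  have hint : IsIntegral (RatFunc M) θ := Algebra.IsIntegral.isIntegral θ
  have hpoly : ∀ x : E, ∃ p : (RatFunc M)[X], aeval θ p = x := by
    intro x
    have hx : x ∈ IntermediateField.adjoin (RatFunc M) {θ} := by rw [hθ]; trivial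
    rw [← IntermediateField.mem_toSubalgebra,
      IntermediateField.adjoin_simple_toSubalgebra_of_isAlgebraic hint.isAlgebraic,
      Algebra.adjoin_singleton_eq_range_aeval] at hx
    exact hx
  choose P hP using hpoly
  let X : Set E := Set.range (fun σ : E ≃ₐ[RatFunc M] E => σ θ) ∪ Set.range (fun i => ι (e i))
  have hX : X.Finite := (Set.finite_range _).union (Set.finite_range _)
  let S : Set (RatFunc M) := ((minpoly (RatFunc M) θ).coeffs : Set (RatFunc M)) ∪
    ⋃ x ∈ X, ((P x).coeffs : Set (RatFunc M))
  have hS : S.Finite := (Finset.finite_toSet _).union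
    (hX.biUnion fun x _ => Finset.finite_toSet _)
  obtain ⟨k₀, hfg, ψ, hψ, hSψ⟩ := aux_fg (k := k) S hS
  refine ⟨k₀, hfg, ?_⟩
  letI : Algebra (RatFunc k₀) (RatFunc M) := ψ.toAlgebra
  letI : Algebra (RatFunc k₀) E := ((algebraMap (RatFunc M) E).comp ψ).toAlgebra
  haveI htow : IsScalarTower (RatFunc k₀) (RatFunc M) E :=
    IsScalarTower.of_algebraMap_eq (fun x => rfl)
  have hψC : ∀ a : k₀, ψ (RatFunc.C a) = RatFunc.C (a : M) := by
    intro a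
    rw [← RatFunc.algebraMap_C, hψ, Polynomial.map_C, RatFunc.algebraMap_C]
    rfl
  have hmapE : ∀ a : k₀, algebraMap (RatFunc k₀) E (RatFunc.C a) =
      algebraMap (RatFunc M) E (RatFunc.C (a : M)) := by
    intro a
    rw [← hψC]; rfl
  have hlift : ∀ p : (RatFunc M)[X], (p.coeffs : Set (RatFunc M)) ⊆ S →
      ∃ q : (RatFunc k₀)[X], q.map (algebraMap (RatFunc k₀) (RatFunc M)) = p := by
    intro p hp
    rw [← Polynomial.mem_lifts, Polynomial.lifts_iff_coeff_lifts]
    intro n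
    by_cases h : p.coeff n = 0
    · rw [h]; exact ⟨0, map_zero _⟩
    · exact hSψ (hp (Polynomial.coeff_mem_coeffs h))
  obtain ⟨f, hf⟩ := hlift (minpoly (RatFunc M) θ) Set.subset_union_left
  have hmem : ∀ x ∈ X, x ∈ IntermediateField.adjoin (RatFunc k₀) {θ} := by
    intro x hx
    obtain ⟨q, hq⟩ := hlift (P x)
      (fun y hy => Or.inr (Set.mem_biUnion hx hy))
    rw [← hP x, ← hq, Polynomial.aeval_map_algebraMap]
    exact IntermediateField.algebra_adjoin_le_adjoin _ _ (Polynomial.aeval_mem_adjoin_singleton _ _)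
  obtain ⟨hfd, hgal, r, hr⟩ := aux_gal θ hθ f hf (fun σ => hmem _ (Or.inl ⟨σ, rfl⟩))
  have hιmem : ∀ x : L, ι x ∈ (IntermediateField.adjoin (RatFunc k₀) {θ}).toSubfield := by
    intro x
    rw [← e.sum_repr x, map_sum]
    refine sum_mem fun i _ => ?_
    rw [Algebra.smul_def, map_mul]
    refine mul_mem ?_ (hmem _ (Or.inr ⟨i, rfl⟩))
    rw [hι]
    have := hmapE (algebraMap k k₀ (e.repr x i))
    change algebraMap (RatFunc M) E (RatFunc.C ((algebraMap k k₀ (e.repr x i) : k₀) : M)) ∈ _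
    rw [← this]
    exact (IntermediateField.adjoin (RatFunc k₀) {θ}).algebraMap_mem _
  refine aux_out k G L α k₀ e (IntermediateField.adjoin (RatFunc k₀) {θ})
    (ι.codRestrict (IntermediateField.adjoin (RatFunc k₀) {θ}).toSubfield hιmem) ?_ ?_
    (r.symm.trans β) ?_
  · intro x
    apply Subtype.ext
    change ι (algebraMap k L x) = algebraMap (RatFunc k₀) E (RatFunc.C (algebraMap k k₀ x))
    rw [hι, hmapE]
    rfl
  · rintro z ⟨p, hp0, hp⟩
    obtain ⟨m, hm⟩ := geo (z : E) ⟨p.map (algebraMap k₀ M),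
      (Polynomial.map_ne_zero_iff (algebraMap k₀ M).injective).2 hp0, by
        have h1 := congrArg (IntermediateField.adjoin (RatFunc k₀) {θ}).val.toRingHom hp
        rw [map_zero, Polynomial.hom_eval₂] at h1
        rw [Polynomial.eval₂_map, ← h1]
        congr 1
        ext a
        exact (hmapE a).symm⟩
    have hd : ∀ j, algebraMap (RatFunc M) E (RatFunc.C (m j)) =
        ∑ g : L ≃ₐ[k] L, β.symm (Function.surjInv hα g) (ι (e.traceDual j) * z) := by
      intro j
      have h1 : ∀ g : L ≃ₐ[k] L, β.symm (Function.surjInv hα g) (ι (e.traceDual j) * z) =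
          ∑ i, algebraMap (RatFunc M) E (RatFunc.C (m i)) * ι (g (e.traceDual j * e i)) := by
        intro g
        rw [hm, Finset.mul_sum, map_sum]
        refine Finset.sum_congr rfl fun i _ => ?_
        rw [mul_left_comm, ← map_mul, map_mul (β.symm _), AlgEquiv.commutes, hβ,
          MulEquiv.apply_symm_apply, Function.surjInv_eq hα]
      rw [Finset.sum_congr rfl (fun g _ => h1 g), Finset.sum_comm]
      have h2 : ∀ i, ∑ g : L ≃ₐ[k] L,
          algebraMap (RatFunc M) E (RatFunc.C (m i)) * ι (g (e.traceDual j * e i)) =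
          if i = j then algebraMap (RatFunc M) E (RatFunc.C (m i)) else 0 := by
        intro i
        rw [← Finset.mul_sum, ← map_sum, ← trace_eq_sum_automorphisms, e.trace_traceDual_mul]
        split_ifs <;> simp
      rw [Finset.sum_congr rfl (fun i _ => h2 i)]
      simp
    have hmk : ∀ j, ∃ a : k₀, algebraMap k₀ M a = m j := by
      intro j
      have hin : algebraMap (RatFunc M) E (RatFunc.C (m j)) ∈
          IntermediateField.adjoin (RatFunc k₀) {θ} := by
        rw [hd]
        refine sum_mem fun g _ => ?_
        have h5 := hr (β.symm (Function.surjInv hα g)) (⟨ι (e.traceDual j), hιmem _⟩ * z)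
        change _ = β.symm (Function.surjInv hα g) (ι (e.traceDual j) * z) at h5
        rw [← h5]
        exact Subtype.property _
      have hfix := (IsGalois.mem_bot_iff_fixed (F := RatFunc k₀)
        (⟨_, hin⟩ : IntermediateField.adjoin (RatFunc k₀) {θ})).2 (by
          intro τ
          apply Subtype.ext
          rw [← r.apply_symm_apply τ, hr]
          exact AlgEquiv.commutes _ _)
      obtain ⟨a, ha⟩ := IntermediateField.mem_bot.1 hfix
      have ha' : algebraMap (RatFunc M) E (ψ a) = algebraMap (RatFunc M) E (RatFunc.C (m j)) :=
        congrArg Subtype.val ha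
      exact aux_const (algebraMap k₀ M) ψ hψ a (m j) ((algebraMap (RatFunc M) E).injective ha')
    choose a ha using hmk
    refine ⟨a, ?_⟩
    apply Subtype.ext
    rw [hm]
    change _ = (IntermediateField.adjoin (RatFunc k₀) {θ}).val _
    rw [map_sum]
    refine Finset.sum_congr rfl fun i _ => ?_
    rw [map_mul, ← ha]
    congr 1
    exact (hmapE (a i)).symm
  · intro τ x
    apply Subtype.ext
    change _ = ι (α (β (r.symm τ)) x)
    rw [← hβ, ← hr _ ⟨ι x, hιmem x⟩, r.apply_symm_apply]
    rfl

/-- **Descent of geometric Galois solutions to a finitely generated subextension.**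
Let `k` be a field, `α : G → Gal(L/k)` a finite Galois embedding problem over `k`, and
`M/k` a field extension which is linearly disjoint from `L` over `k` (encoded by
`L ⊗_k M` being an integral domain) such that the induced embedding problem `α_M` has a
geometric Galois solution.  Then there is an intermediate field `k ⊆ k₀ ⊆ M`, finitely
generated as a field extension of `k`, such that `α_{k₀}` has a geometric Galois
solution. -/
theorem statement_8 (k : Type) [Field k] (G : Type) [Group G] [Finite G]
    (L : Type) [Field L] [Algebra k L] [FiniteDimensional k L] [IsGalois k L]
    (α : G →* (L ≃ₐ[k] L)) (hα : Function.Surjective α)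
    (M : Type) [Field M] [Algebra k M]
    (hdisj : IsDomain (TensorProduct k L M))
    (hM : HasGeomGaloisSolution k G L α M) :
    ∃ k₀ : IntermediateField k M, k₀.FG ∧ HasGeomGaloisSolution k G L α k₀ := by
  exact aux_main k G L α hα M hM
end

section
/- Let k be a field and α : G → Aut(L/k) a finite embedding problem over k. Then there exist n ≥ 1, a tuple T = (T₁,…,Tₙ) of algebraically independent indeterminates over k, a finite separable extension E of k(T₁,…,Tₙ) containing L(T₁,…,Tₙ), and an isomorphism β : Aut(E/k(T₁,…,Tₙ)) → G such that every σ ∈ Aut(E/k(T₁,…,Tₙ)) maps L onto itself with σ|_L = α(β(σ)), and moreover every element of E that is algebraic over k lies in L (i.e., E ∩ k̄ = L). -/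
set_option synthInstance.maxHeartbeats 1000000
set_option maxHeartbeats 1000000
set_option linter.unusedSimpArgs false
open Polynomial in
theorem polyLem {E : Type*} [Field E] (d m : ℕ) (hd : (d : E) ≠ 0) (hc : Nat.Coprime d m)
    (hm : 1 < m) (hmd : m + 1 < d) (P : E[X]) (z z' : E)
    (h : P ^ d + P ^ m + C z' * P = X ^ d + X ^ m + C z * X) : P = X ∧ z' = z := by
  have hr : (X ^ d + X ^ m + C z * X : E[X]).natDegree = d := by
    have : (X ^ m + C z * X : E[X]).natDegree < d := by
      refine lt_of_le_of_lt (natDegree_add_le _ _) (max_lt ?_ ?_)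
      · simp; omega
      · exact lt_of_le_of_lt ((natDegree_C_mul_le _ _).trans natDegree_X_le) (by omega)
    rw [add_assoc, natDegree_add_eq_left_of_natDegree_lt] <;> simp [this]
  have hP : P.natDegree = 1 := by
    rcases Nat.eq_zero_or_pos P.natDegree with h0 | h0
    · rw [eq_C_of_natDegree_eq_zero h0] at h
      rw [← h] at hr
      have : (C (P.coeff 0) ^ d + C (P.coeff 0) ^ m + C z' * C (P.coeff 0)).natDegree = 0 := by
        simp only [← C_pow, ← C_mul, ← C_add, natDegree_C]
      omega
    · have hl : (P ^ d + P ^ m + C z' * P : E[X]).natDegree = d * P.natDegree := by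
        have : (P ^ m + C z' * P : E[X]).natDegree < d * P.natDegree := by
          refine lt_of_le_of_lt (natDegree_add_le _ _) (max_lt ?_ ?_)
          · simp only [natDegree_pow]; gcongr; omega
          · exact lt_of_le_of_lt (natDegree_C_mul_le _ _) (by nlinarith)
        rw [add_assoc, natDegree_add_eq_left_of_natDegree_lt] <;> simp [this]
      rw [h, hr] at hl
      have : 0 < d := by omega
      nlinarith
  obtain ⟨a, ha, b, rfl⟩ := natDegree_eq_one.1 hP
  have e1 : (C a * X + C b : E[X]) = C a * (X + C (b / a)) := by
    rw [mul_add, ← C_mul]; congr 2; field_simp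
  have key : ∀ i, a ^ d * ((b / a) ^ (d - i) * (d.choose i)) + a ^ m * ((b / a) ^ (m - i) * (m.choose i))
      + z' * ((a * if 1 = i then 1 else 0) + (C b).coeff i)
      = (if i = d then 1 else 0) + (if i = m then 1 else 0) + z * (if 1 = i then 1 else 0) := by
    intro i
    have := congrArg (fun q => q.coeff i) h
    simp only [coeff_add, coeff_C_mul] at this
    rw [e1] at this
    simp only [mul_pow, ← C_pow, coeff_C_mul, coeff_X_add_C_pow, coeff_X_pow, coeff_X] at this
    exact this
  have kd := key d
  have kd1 := key (d - 1)
  have km := key m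
  have k1 := key 1
  have hdm : d ≠ m := by omega
  have h1 : ¬ (1 = d) := by omega
  have h2 : ¬ (d = 0) := by omega
  have h3 : ¬ (1 = m) := by omega
  have h4 : ¬ (d - 1 = d) := by omega
  have h5 : ¬ (d - 1 = m) := by omega
  have h6 : ¬ (1 = d - 1) := by omega
  have h7 : d - (d - 1) = 1 := by omega
  have h8 : d.choose (d - 1) = d := by
    rw [Nat.choose_symm (by omega : 1 ≤ d)]; simp
  simp [coeff_X, coeff_C, hdm, h1, h2, Nat.choose_eq_zero_of_lt (by omega : m < d)] at kd
  simp [coeff_X, coeff_C, h4, h5, h6, h7, h8, Nat.choose_eq_zero_of_lt (by omega : m < d - 1)] at kd1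
  rw [if_neg (by omega), add_zero, kd] at kd1
  replace kd1 : b = 0 := by simpa [ha, hd] using kd1
  subst kd1
  have h9 : d - m ≠ 0 := by omega
  simp [coeff_X, coeff_C, h9, hdm.symm, h3, (by omega : m ≠ 0)] at km
  simp [coeff_X, coeff_C, h1, h3, (by omega : d - 1 ≠ 0), (by omega : m - 1 ≠ 0)] at k1
  have ha1 : a = 1 := by
    have h1 := orderOf_dvd_of_pow_eq_one kd
    have h2 := orderOf_dvd_of_pow_eq_one km
    have := Nat.dvd_gcd h1 h2
    rw [hc] at this
    exact orderOf_eq_one_iff.1 (Nat.dvd_one.1 this)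
  subst ha1
  rw [zero_pow (by omega), zero_pow (by omega)] at k1
  simp at k1
  simp [k1]

theorem algLem {σ L : Type*} [Field L] (a : FractionRing (MvPolynomial σ L)) (ha : IsAlgebraic L a) :
    a ∈ Set.range (algebraMap L (FractionRing (MvPolynomial σ L))) := by
  let F := FractionRing (MvPolynomial σ L)
  have hx : AlgebraicIndependent L (fun i : σ => algebraMap (MvPolynomial σ L) F (MvPolynomial.X i)) := by
    have := (MvPolynomial.algebraicIndependent_X σ L).map' (f := IsScalarTower.toAlgHom L (MvPolynomial σ L) F)
      (IsFractionRing.injective (MvPolynomial σ L) F)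
    exact this
  have hx' := hx.algebraicClosure
  obtain ⟨p, q, hq, haa⟩ := IsFractionRing.div_surjective (A := MvPolynomial σ L) a
  have hq0 : q ≠ 0 := nonZeroDivisors.ne_zero hq
  let a' : algebraicClosure L F := ⟨a, mem_algebraicClosure_iff.2 ha⟩
  have hae : ∀ r : MvPolynomial σ L, MvPolynomial.aeval (fun i : σ => algebraMap (MvPolynomial σ L) F (MvPolynomial.X i)) (MvPolynomial.map (algebraMap L (algebraicClosure L F)) r) = algebraMap _ F r := by
    intro r
    rw [MvPolynomial.aeval_map_algebraMap]
    have : MvPolynomial.aeval (R := L) (fun i : σ => algebraMap (MvPolynomial σ L) F (MvPolynomial.X i)) = IsScalarTower.toAlgHom L (MvPolynomial σ L) F := by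
      ext i; simp
    rw [this]; rfl
  have : MvPolynomial.map (algebraMap L (algebraicClosure L F)) p = MvPolynomial.C a' * MvPolynomial.map (algebraMap L (algebraicClosure L F)) q := by
    apply hx'
    rw [map_mul, hae, hae, MvPolynomial.aeval_C]
    change _ = a * _
    rw [← haa, div_mul_cancel₀]
    simpa using hq0
  obtain ⟨i, hi⟩ := MvPolynomial.ne_zero_iff.1 hq0
  have h2 := congrArg (fun r => ((MvPolynomial.coeff i r : algebraicClosure L F) : F)) this
  simp only [MvPolynomial.coeff_map, MvPolynomial.coeff_C_mul] at h2
  refine ⟨p.coeff i / q.coeff i, ?_⟩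
  rw [map_div₀, div_eq_iff (by simpa using hi)]
  exact h2

section core
open Polynomial
variable {K E : Type*} [Field K] [Field E] [Algebra K E]

noncomputable def liftHom : (E ≃ₐ[K] E) →* (RatFunc E ≃ₐ[K] RatFunc E) :=
  (IsFractionRing.fieldEquivOfAlgEquivHom (A := K) (B := E[X]) K (RatFunc E)).comp
   { toFun := fun τ => Polynomial.mapAlgEquiv τ
     map_one' := by ext; simp
     map_mul' := by intro a b; ext; simp }

theorem liftHom_poly (τ : E ≃ₐ[K] E) (p : E[X]) :
    liftHom τ (algebraMap E[X] (RatFunc E) p) = algebraMap E[X] (RatFunc E) (p.map (τ : E →+* E)) := by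
  simp [liftHom]
theorem liftHom_C (τ : E ≃ₐ[K] E) (x : E) : liftHom τ (RatFunc.C x) = RatFunc.C (τ x) := by
  have := liftHom_poly τ (C x)
  simpa using this
theorem liftHom_X (τ : E ≃ₐ[K] E) : liftHom τ (RatFunc.X) = RatFunc.X := by
  have := liftHom_poly τ X
  simpa using this

theorem aut_ext (σ τ : RatFunc E ≃+* RatFunc E) (h : ∀ x, σ (RatFunc.C x) = τ (RatFunc.C x))
    (hX : σ RatFunc.X = τ RatFunc.X) : σ = τ := by
  have : (σ : RatFunc E →+* RatFunc E) = τ := by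
    apply IsFractionRing.ringHom_ext (A := E[X])
    intro p
    have : ((σ : RatFunc E →+* RatFunc E).comp (algebraMap E[X] _)) = (τ : RatFunc E →+* RatFunc E).comp (algebraMap E[X] _) := by
      ext x
      · simpa using h x
      · simpa using hX
    exact DFunLike.congr_fun this p
  ext x
  exact DFunLike.congr_fun this x

theorem finite_of_ess {K F : Type*} [Field K] [Field F] [Algebra K F] [Algebra.EssFiniteType K F]
    [Algebra.IsAlgebraic K F] : FiniteDimensional K F := by
  obtain ⟨s, hs⟩ := IntermediateField.fg_top (F := K) (E := F)
  have : FiniteDimensional K (IntermediateField.adjoin K (s : Set F)) :=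
    IntermediateField.finiteDimensional_adjoin
      (fun x _ => (Algebra.IsAlgebraic.isAlgebraic (R := K) x).isIntegral)
  rw [hs] at this
  exact Module.Finite.equiv (IntermediateField.topEquiv (F := K) (E := F)).toLinearEquiv

theorem sep_of_root {K F : Type*} [Field K] [Field F] [Algebra K F] (x : F) (q : K[X])
    (h0 : aeval x q = 0) (h1 : aeval x (derivative q) ≠ 0) : IsSeparable K x := by
  have hq : q ≠ 0 := by rintro rfl; simp at h1
  have hx : IsAlgebraic K x := ⟨q, hq, h0⟩
  have hirr := minpoly.irreducible hx.isIntegral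
  rw [IsSeparable, separable_iff_derivative_ne_zero hirr]
  intro hd
  obtain ⟨r, hr⟩ := minpoly.dvd K x h0
  apply h1
  rw [hr, derivative_mul, hd]
  simp

theorem ratFunc_mem {F : Subfield (RatFunc E)} (hC : ∀ x, RatFunc.C x ∈ F) (hX : RatFunc.X ∈ F)
    (y : RatFunc E) : y ∈ F := by
  have hp : ∀ p : E[X], algebraMap E[X] (RatFunc E) p ∈ F := by
    intro p
    induction p using Polynomial.induction_on' with
    | add p q hp hq => rw [map_add]; exact add_mem hp hq
    | monomial n a =>
      rw [← C_mul_X_pow_eq_monomial, map_mul, map_pow, RatFunc.algebraMap_C, RatFunc.algebraMap_X]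
      exact mul_mem (hC _) (pow_mem hX _)
  rw [← RatFunc.num_div_denom y]
  exact div_mem (hp _) (hp _)

theorem dm_exists (E : Type*) [Field E] : ∃ d m : ℕ, (d : E) ≠ 0 ∧ Nat.Coprime d m ∧ 1 < m ∧ m + 1 < d := by
  by_cases h : (5 : E) = 0
  · refine ⟨7, 3, ?_, by norm_num, by norm_num, by norm_num⟩
    intro h7
    push_cast at h7
    have : (1 : E) = 0 := by linear_combination 3 * h - 2 * h7
    exact one_ne_zero this
  · exact ⟨5, 3, by exact_mod_cast h, by norm_num, by norm_num, by norm_num⟩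

theorem sigma_mem (σ : RatFunc E ≃ₐ[K] RatFunc E) [Algebra.IsAlgebraic K E] (x : E) :
    ∃ y, σ (RatFunc.C x) = RatFunc.C y := by
  by_contra hcon
  apply RatFunc.transcendental_of_ne_C _ hcon
  have h1 : IsAlgebraic K (RatFunc.C x) := (Algebra.IsAlgebraic.isAlgebraic (R := K) x).algebraMap (A := RatFunc E)
  exact (h1.algHom σ.toAlgHom).tower_top E

open IntermediateField in
theorem core [FiniteDimensional K E] [Algebra.IsSeparable K E] {G : Type*} [Group G]
    (φ : G →* (E ≃ₐ[K] E)) (hφ : Function.Injective φ) :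
    ∃ s : RatFunc E, Transcendental E s ∧ FiniteDimensional K⟮s⟯ (RatFunc E) ∧
      Algebra.IsSeparable K⟮s⟯ (RatFunc E) ∧
      ∃ β : (RatFunc E ≃ₐ[K⟮s⟯] RatFunc E) ≃* G,
        ∀ σ x, σ (RatFunc.C x) = RatFunc.C (φ (β σ) x) := by
  obtain ⟨d, m, hd, hc, hm, hmd⟩ := dm_exists E
  obtain ⟨z, hz⟩ := Field.exists_primitive_element K (fixedField φ.range)
  have hzfix : ∀ τ : E ≃ₐ[K] E, τ z = z → τ ∈ φ.range := by
    intro τ hτ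
    rw [← fixingSubgroup_fixedField φ.range]
    have h1 : K⟮(z : E)⟯ ≤ fixedField (Subgroup.zpowers τ) := by
      rw [adjoin_simple_le_iff]
      rw [mem_fixedField_iff]
      intro f hf
      have h2 : Subgroup.zpowers τ ≤ MulAction.stabilizer (E ≃ₐ[K] E) (z : E) := by
        rw [Subgroup.zpowers_le]; exact hτ
      exact h2 hf
    have h3 : K⟮(z : E)⟯ = fixedField φ.range := by
      have := congrArg (IntermediateField.map (fixedField φ.range).val) hz
      rw [adjoin_map] at this
      simpa [← AlgHom.fieldRange_eq_map] using this
    rw [h3] at h1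
    have := (le_iff_le _ _).1 h1
    exact this (Subgroup.mem_zpowers τ)
  have hφz : ∀ g, φ g z = z := fun g => z.2 ⟨φ g, g, rfl⟩
  set f : E[X] := X ^ d + X ^ m + C (z : E) * X with hf
  set s : RatFunc E := algebraMap E[X] (RatFunc E) f with hs
  have hs' : s = RatFunc.X ^ d + RatFunc.X ^ m + RatFunc.C (z : E) * RatFunc.X := by
    simp [hs, hf]
  have hfd : f.coeff d = 1 := by
    have h1 : d ≠ m := by omega
    have h2 : ¬ (1 = d) := by omega
    simp [hf, coeff_X_pow, coeff_X, h1, h2]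
  refine ⟨s, ?_, ?_⟩
  · apply RatFunc.transcendental_of_ne_C
    rintro ⟨c, hc⟩
    rw [hs, ← RatFunc.algebraMap_C] at hc
    have := RatFunc.algebraMap_injective E hc
    rw [this, coeff_C, if_neg (by omega)] at hfd
    exact zero_ne_one hfd
  have hsep : Algebra.IsSeparable K⟮s⟯ (RatFunc E) := by
    rw [← separableClosure.eq_top_iff, eq_top_iff]
    intro y _
    have hC : ∀ x : E, RatFunc.C x ∈ separableClosure K⟮s⟯ (RatFunc E) := by
      intro x
      rw [mem_separableClosure_iff]
      have h1 : IsSeparable K (RatFunc.C x) :=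
        (Algebra.IsSeparable.isSeparable K x).map (IsScalarTower.toAlgHom K E (RatFunc E))
          (algebraMap E (RatFunc E)).injective
      exact h1.tower_top _
    refine ratFunc_mem (F := (separableClosure K⟮s⟯ (RatFunc E)).toSubfield) hC ?_ y
    set S := separableClosure K⟮s⟯ (RatFunc E) with hS
    have hsS : s ∈ S := S.algebraMap_mem ⟨s, mem_adjoin_simple_self K s⟩
    have : RatFunc.X ∈ separableClosure S (RatFunc E) := by
      rw [mem_separableClosure_iff]
      apply sep_of_root _ (X ^ d + X ^ m + C (⟨RatFunc.C (z : E), hC z⟩ : S) * X - C (⟨s, hsS⟩ : S))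
      · simp only [map_add, map_sub, map_mul, map_pow, aeval_X, aeval_C]
        change _ + RatFunc.C (z : E) * RatFunc.X - s = 0
        rw [hs', sub_self]
      · have h1 : f.derivative ≠ 0 := by
          intro h0
          have := congrArg (fun p => p.coeff (d - 1)) h0
          simp only [coeff_derivative] at this
          rw [Nat.sub_add_cancel (by omega), hfd] at this
          apply hd
          have h2 : ((d - 1 : ℕ) : E) + 1 = d := by
            rw [← Nat.cast_add_one, Nat.sub_add_cancel (by omega)]
          rw [h2] at this
          simpa using this
        have h2 : algebraMap E[X] (RatFunc E) f.derivative ≠ 0 := by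
          simpa using h1
        convert h2 using 1
        simp [hf, derivative_X_pow]
    rw [hS, separableClosure.separableClosure_eq_bot, mem_bot] at this
    obtain ⟨y, hy⟩ := this
    rw [← hy]
    exact y.2
  have hess : Algebra.EssFiniteType K⟮s⟯ (RatFunc E) := by
    have h1 : Algebra.EssFiniteType E[X] (RatFunc E) := .of_isLocalization _ (nonZeroDivisors E[X])
    have h2 : Algebra.EssFiniteType E (RatFunc E) := .comp E E[X] _
    have h3 : Algebra.EssFiniteType K (RatFunc E) := .comp K E _
    exact .of_comp K _ _
  refine ⟨finite_of_ess, hsep, ?_⟩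
  have hfix : ∀ g, liftHom (φ g) ∈ K⟮s⟯.fixingSubgroup := by
    intro g
    have h1 : K⟮s⟯ ≤ fixedField (Subgroup.zpowers (liftHom (φ g))) := by
      rw [adjoin_simple_le_iff, mem_fixedField_iff]
      intro f hf
      have h2 : Subgroup.zpowers (liftHom (φ g)) ≤ MulAction.stabilizer (RatFunc E ≃ₐ[K] RatFunc E) s := by
        rw [Subgroup.zpowers_le]
        change liftHom (φ g) s = s
        rw [hs']
        simp only [map_add, map_mul, map_pow, liftHom_X, liftHom_C, hφz]
      exact h2 hf
    exact (le_iff_le _ _).1 h1 (Subgroup.mem_zpowers _)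
  let ψ : G →* (RatFunc E ≃ₐ[K⟮s⟯] RatFunc E) :=
    (fixingSubgroupEquiv K⟮s⟯).toMonoidHom.comp ((liftHom.comp φ).codRestrict _ hfix)
  have hψ : ∀ g y, ψ g y = liftHom (φ g) y := fun g y => rfl
  have hbij : Function.Bijective ψ := by
    constructor
    · intro g h hgh
      apply hφ
      ext x
      have := DFunLike.congr_fun hgh (RatFunc.C x)
      rw [hψ, hψ, liftHom_C, liftHom_C] at this
      exact RatFunc.C_injective this
    · intro σ
      choose t ht using sigma_mem (σ.restrictScalars K)
      have ht : ∀ x, σ (RatFunc.C x) = RatFunc.C (t x) := ht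
      let tt : E →ₐ[K] E :=
        { toFun := t
          map_one' := by apply RatFunc.C_injective; rw [← ht]; simp
          map_mul' := by intro a b; apply RatFunc.C_injective; rw [← ht]; simp [ht]
          map_zero' := by apply RatFunc.C_injective; rw [← ht]; simp
          map_add' := by intro a b; apply RatFunc.C_injective; rw [← ht]; simp [ht]
          commutes' := by
            intro r; apply RatFunc.C_injective; rw [← ht]
            exact (σ.restrictScalars K).commutes r }
      let τ : E ≃ₐ[K] E := AlgEquiv.ofBijective tt (Algebra.IsAlgebraic.algHom_bijective tt)
      have hτ : ∀ x, τ x = t x := fun x => rfl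
      have hσs : σ s = s := σ.commutes ⟨s, mem_adjoin_simple_self K s⟩
      have heq : σ (RatFunc.X ^ d + RatFunc.X ^ m + RatFunc.C (z : E) * RatFunc.X) =
          RatFunc.X ^ d + RatFunc.X ^ m + RatFunc.C (z : E) * RatFunc.X := by
        rw [← hs']; exact hσs
      have hs2 : algebraMap E[X] (RatFunc E) f =
        RatFunc.X ^ d + RatFunc.X ^ m + RatFunc.C (z : E) * RatFunc.X := hs'
      simp only [map_add, map_mul, map_pow, ht] at heq
      have hint : IsIntegral E[X] (σ RatFunc.X) := by
        refine ⟨X ^ d + (X ^ m + C (C (t z)) * X - C f), ?_, ?_⟩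
        · apply monic_X_pow_add
          refine lt_of_le_of_lt (degree_sub_le _ _) (max_lt (lt_of_le_of_lt (degree_add_le _ _) (max_lt ?_ ?_)) ?_)
          · rw [degree_X_pow]; exact_mod_cast (by omega)
          · exact lt_of_le_of_lt (degree_C_mul_X_le _) (by exact_mod_cast (by omega))
          · exact lt_of_le_of_lt degree_C_le (by exact_mod_cast (by omega))
        · simp only [eval₂_add, eval₂_sub, eval₂_mul, eval₂_pow, eval₂_X, eval₂_C, RatFunc.algebraMap_C]
          rw [hs2, ← heq]; ring
      obtain ⟨P, hP⟩ := IsIntegrallyClosed.isIntegral_iff.1 hint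
      have hpoly : P ^ d + P ^ m + C (t z) * P = X ^ d + X ^ m + C (z : E) * X := by
        apply RatFunc.algebraMap_injective E
        simp only [map_add, map_mul, map_pow, RatFunc.algebraMap_C, RatFunc.algebraMap_X, hP]
        exact heq
      obtain ⟨rfl, htz⟩ := polyLem d m hd hc hm hmd P z (t z) hpoly
      obtain ⟨g, hg⟩ := hzfix τ htz
      refine ⟨g, ?_⟩
      have := aut_ext (ψ g).toRingEquiv σ.toRingEquiv (fun x => ?_) ?_
      · ext y; exact DFunLike.congr_fun this y
      · change ψ g _ = σ _
        rw [hψ, liftHom_C, ht, hg, hτ]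
      · change ψ g _ = σ _
        rw [hψ, liftHom_X, ← hP, RatFunc.algebraMap_X]
  let β := (MulEquiv.ofBijective ψ hbij).symm
  refine ⟨β, fun σ x => ?_⟩
  have : ψ (β σ) = σ := (MulEquiv.ofBijective ψ hbij).apply_symm_apply σ
  conv_lhs => rw [← this]
  rw [hψ, liftHom_C]
end core

theorem transport {k G L : Type} [Field k] [Group G] [Field L] [Algebra k L]
    (α : G →* (L ≃ₐ[k] L)) (R : Type) [Field R] [Algebra k R]
    {K F : Type} [Field K] [Field F] [Algebra K F] [Algebra k F]
    [Algebra L F] [IsScalarTower k L F] (e : R ≃+* K)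
    (he : ∀ c, algebraMap K F (e (algebraMap k R c)) = algebraMap k F c)
    (hfin : FiniteDimensional K F) (hsep : Algebra.IsSeparable K F)
    (halg : ∀ z : F, IsAlgebraic k z → z ∈ Set.range (algebraMap L F))
    (β : (F ≃ₐ[K] F) ≃* G)
    (hβ : ∀ σ x, σ (algebraMap L F x) = algebraMap L F (α (β σ) x)) :
      ∃ (ι : L →ₐ[k] AlgebraicClosure R)
        (E : IntermediateField R (AlgebraicClosure R))
        (hE : Set.range ι ⊆ (E : Set (AlgebraicClosure R))),
        FiniteDimensional R E ∧
        Algebra.IsSeparable R E ∧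
        (∀ z : AlgebraicClosure R,
          z ∈ E → IsAlgebraic k z → z ∈ Set.range ι) ∧
        ∃ β : (E ≃ₐ[R] E) ≃* G,
          ∀ (σ : E ≃ₐ[R] E) (x : L),
            ((σ ⟨ι x, hE (Set.mem_range_self x)⟩ : E) : AlgebraicClosure R) =
              ι (α (β σ) x) := by
  letI : Algebra R F := ((algebraMap K F).comp (e : R →+* K)).toAlgebra
  have hRF : ∀ r, algebraMap R F r = algebraMap K F (e r) := fun r => rfl
  haveI : IsScalarTower k R F := IsScalarTower.of_algebraMap_eq (fun c => by rw [hRF, he])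
  haveI : Algebra.IsSeparable R F := Algebra.IsSeparable.of_equiv_equiv e.symm (RingEquiv.refl F) (by
    ext r; simp [hRF])
  haveI : FiniteDimensional R F := Module.Finite.of_equiv_equiv e.symm (RingEquiv.refl F) (by
    ext r; simp [hRF])
  let j : F →ₐ[R] AlgebraicClosure R := IsAlgClosed.lift
  let jE : F ≃ₐ[R] j.fieldRange := AlgEquiv.ofInjectiveField j
  have hjE : ∀ y, (jE y : AlgebraicClosure R) = j y := fun y => rfl
  let ρ : (F ≃ₐ[R] F) ≃* (F ≃ₐ[K] F) :=
    { toFun := fun σ => AlgEquiv.ofRingEquiv (f := σ.toRingEquiv) (fun c => by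
        have := σ.commutes (e.symm c)
        rw [hRF, e.apply_symm_apply] at this
        exact this)
      invFun := fun σ => AlgEquiv.ofRingEquiv (f := σ.toRingEquiv) (fun c => σ.commutes (e c))
      left_inv := fun σ => rfl
      right_inv := fun σ => rfl
      map_mul' := fun σ τ => rfl }
  refine ⟨(j.restrictScalars k).comp (IsScalarTower.toAlgHom k L F), j.fieldRange, ?_, ?_, ?_, ?_, ?_⟩
  · rintro _ ⟨x, rfl⟩
    exact ⟨algebraMap L F x, rfl⟩
  · exact Module.Finite.equiv jE.toLinearEquiv
  · exact AlgEquiv.Algebra.isSeparable jE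
  · rintro _ ⟨y, rfl⟩ hy
    have hy' : IsAlgebraic k y := by
      have : Function.Injective (j.restrictScalars k) := j.toRingHom.injective
      exact (isAlgebraic_algHom_iff (j.restrictScalars k) this).1 hy
    obtain ⟨x, rfl⟩ := halg y hy'
    exact ⟨x, rfl⟩
  · refine ⟨(AlgEquiv.autCongr jE.symm).trans (ρ.trans β), fun σ x => ?_⟩
    have h1 := hβ (ρ (AlgEquiv.autCongr jE.symm σ)) x
    have h2 : (ρ (AlgEquiv.autCongr jE.symm σ)) (algebraMap L F x) = jE.symm (σ (jE (algebraMap L F x))) := rfl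
    rw [h2, AlgEquiv.symm_apply_eq] at h1
    exact congrArg Subtype.val h1

section step1
variable {k G L : Type} [Field k] [Group G] [Field L] [Algebra k L]
    (α : G →* (L ≃ₐ[k] L))

noncomputable def polyAct : G →* (MvPolynomial G L ≃ₐ[k] MvPolynomial G L) where
  toFun g := ((MvPolynomial.renameEquiv L (Equiv.mulLeft g)).restrictScalars k).trans
    (MvPolynomial.mapAlgEquiv G (α g))
  map_one' := by
    ext p : 1
    simp
    exact MvPolynomial.map_id p
  map_mul' g h := by
    ext p : 1
    induction p using MvPolynomial.induction_on with
    | C a => simp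
    | add p q hp hq => rw [map_add, map_add, hp, hq]
    | mul_X p i hp => rw [map_mul _ p, map_mul _ p, hp]; simp [mul_assoc]

theorem polyAct_C (g : G) (a : L) : polyAct α g (MvPolynomial.C a) = MvPolynomial.C (α g a) := by
  simp [polyAct]
theorem polyAct_X (g h : G) : polyAct α g (MvPolynomial.X h) = MvPolynomial.X (g * h) := by
  simp [polyAct]
theorem polyAct_map (g : G) (p : MvPolynomial G k) :
    polyAct α g (MvPolynomial.map (algebraMap k L) p) =
      MvPolynomial.map (algebraMap k L) (MvPolynomial.rename (Equiv.mulLeft g) p) := by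
  induction p using MvPolynomial.induction_on with
    | C a => simp [polyAct_C]
    | add p q hp hq => simp only [map_add, hp, hq]
    | mul_X p i hp => simp [map_mul, hp, polyAct_X]

noncomputable def fieldAct : G →* (FractionRing (MvPolynomial G L) ≃ₐ[k] FractionRing (MvPolynomial G L)) :=
  (IsFractionRing.fieldEquivOfAlgEquivHom (A := k) (B := MvPolynomial G L) k (FractionRing (MvPolynomial G L))).comp
    (polyAct α)

theorem fieldAct_poly (g : G) (p : MvPolynomial G L) :
    fieldAct α g (algebraMap _ _ p) = algebraMap _ _ (polyAct α g p) := by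
  simp [fieldAct]

theorem fieldAct_L (g : G) (x : L) :
    fieldAct α g (algebraMap L _ x) = algebraMap L _ (α g x) := by
  have := fieldAct_poly α g (MvPolynomial.C x)
  rw [polyAct_C] at this
  exact this

theorem fieldAct_injective : Function.Injective (fieldAct α) := by
  intro g h hgh
  have := DFunLike.congr_fun hgh (algebraMap (MvPolynomial G L) _ (MvPolynomial.X 1))
  rw [fieldAct_poly, fieldAct_poly, polyAct_X, polyAct_X] at this
  have := MvPolynomial.X_injective (IsFractionRing.injective (MvPolynomial G L) (FractionRing (MvPolynomial G L)) this)
  simpa using this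

variable (k G L) in
noncomputable def ee [Fintype G] (i : Fin (Fintype.card G)) : FractionRing (MvPolynomial G L) :=
  algebraMap (MvPolynomial G L) _ (MvPolynomial.map (algebraMap k L) (MvPolynomial.esymm G k (i + 1)))

theorem ee_indep [Fintype G] : AlgebraicIndependent k (ee k G L) := by
  have h1 : AlgebraicIndependent k (fun i : Fin (Fintype.card G) => MvPolynomial.esymm G k (i + 1)) := by
    have := MvPolynomial.esymmAlgHom_injective (σ := G) (n := Fintype.card G) k le_rfl
    intro p q hpq
    apply this
    apply Subtype.ext
    rw [MvPolynomial.esymmAlgHom_apply, MvPolynomial.esymmAlgHom_apply]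
    exact hpq
  have h2 := h1.map' (f := MvPolynomial.mapAlgHom (Algebra.ofId k L))
    (MvPolynomial.map_injective _ (algebraMap k L).injective)
  have h3 := h2.map' (f := IsScalarTower.toAlgHom k (MvPolynomial G L) (FractionRing (MvPolynomial G L)))
    (IsFractionRing.injective _ _)
  exact h3

variable (k G L) in
noncomputable abbrev KK [Fintype G] : IntermediateField k (FractionRing (MvPolynomial G L)) :=
  IntermediateField.adjoin k (Set.range (ee k G L))

theorem fieldAct_fix [Fintype G] (g : G) : fieldAct α g ∈ (KK k G L).fixingSubgroup := by
  have h1 : KK k G L ≤ IntermediateField.fixedField (Subgroup.zpowers (fieldAct α g)) := by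
    rw [IntermediateField.adjoin_le_iff]
    rintro _ ⟨i, rfl⟩
    rw [SetLike.mem_coe, IntermediateField.mem_fixedField_iff]
    intro f hf
    have h2 : Subgroup.zpowers (fieldAct α g) ≤ MulAction.stabilizer (_ ≃ₐ[k] _) (ee k G L i) := by
      rw [Subgroup.zpowers_le]
      change fieldAct α g (ee k G L i) = ee k G L i
      rw [ee, fieldAct_poly, polyAct_map, MvPolynomial.rename_esymm]
    exact h2 hf
  exact (IntermediateField.le_iff_le _ _).1 h1 (Subgroup.mem_zpowers _)

open Polynomial in
theorem KK_sep [Fintype G] [Algebra.IsSeparable k L] :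
    Algebra.IsSeparable (KK k G L) (FractionRing (MvPolynomial G L)) := by
  rw [← separableClosure.eq_top_iff, eq_top_iff]
  intro y _
  set S := separableClosure (KK k G L) (FractionRing (MvPolynomial G L)) with hS
  have hL : ∀ x : L, algebraMap L (FractionRing (MvPolynomial G L)) x ∈ S := by
    intro x
    rw [mem_separableClosure_iff]
    have h1 : IsSeparable k (algebraMap L (FractionRing (MvPolynomial G L)) x) :=
      (Algebra.IsSeparable.isSeparable k x).map
        (IsScalarTower.toAlgHom k L (FractionRing (MvPolynomial G L)))
        (algebraMap L (FractionRing (MvPolynomial G L))).injective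
    exact h1.tower_top _
  have hX : ∀ g : G, algebraMap (MvPolynomial G L) (FractionRing (MvPolynomial G L)) (MvPolynomial.X g) ∈ S := by
    intro g
    let xx : G → FractionRing (MvPolynomial G L) := fun g => algebraMap (MvPolynomial G L) (FractionRing (MvPolynomial G L)) (MvPolynomial.X g)
    have hxx : Function.Injective xx := fun a b h =>
      MvPolynomial.X_injective (IsFractionRing.injective (MvPolynomial G L) (FractionRing (MvPolynomial G L)) h)
    have hlift : (∏ g : G, (X + C (xx g))) ∈ lifts (algebraMap (KK k G L) (FractionRing (MvPolynomial G L))) := by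
      let h : MvPolynomial G k →+* FractionRing (MvPolynomial G L) :=
        (algebraMap (MvPolynomial G L) (FractionRing (MvPolynomial G L))).comp
          (MvPolynomial.map (algebraMap k L))
      have h1 := congrArg (Polynomial.map h) (MvPolynomial.prod_C_add_X_eq_sum_esymm k G)
      have h2 : ∀ g, h (MvPolynomial.X g) = xx g := fun g => by simp [h, xx]
      simp only [Polynomial.map_prod, Polynomial.map_sum, Polynomial.map_add, Polynomial.map_mul,
        Polynomial.map_pow, Polynomial.map_X, Polynomial.map_C, h2] at h1
      rw [h1]
      refine sum_mem fun j hj => mul_mem ?_ (pow_mem (X_mem_lifts _) _)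
      have h3 : h (MvPolynomial.esymm G k j) ∈ KK k G L := by
        rcases j with _ | j
        · rw [MvPolynomial.esymm_zero, map_one]; exact one_mem _
        · have hj' : j < Fintype.card G := by
            have := Finset.mem_range.1 hj
            omega
          exact IntermediateField.subset_adjoin _ _ ⟨⟨j, hj'⟩, rfl⟩
      exact C_mem_lifts (algebraMap (KK k G L) (FractionRing (MvPolynomial G L))) ⟨_, h3⟩
    obtain ⟨q, hq⟩ := (mem_lifts _).1 hlift
    have hqs : q.Separable := by
      rw [← separable_map (algebraMap (KK k G L) (FractionRing (MvPolynomial G L))), hq]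
      have h4 := separable_prod_X_sub_C_iff.2 (neg_injective.comp hxx)
      simpa using h4
    have h5 : IsSeparable (KK k G L) (- xx g) := by
      refine hqs.of_dvd (minpoly.dvd _ _ ?_)
      rw [aeval_def, ← eval_map, hq, eval_prod]
      exact Finset.prod_eq_zero (Finset.mem_univ g) (by simp)
    exact neg_mem_iff.1 ((mem_separableClosure_iff).2 h5)
  have hp : ∀ p : MvPolynomial G L, algebraMap (MvPolynomial G L) (FractionRing (MvPolynomial G L)) p ∈ S := by
    intro p
    induction p using MvPolynomial.induction_on with
    | C a => exact hL a
    | add p q hp hq => rw [map_add]; exact add_mem hp hq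
    | mul_X p i hp => rw [map_mul]; exact mul_mem hp (hX i)
  obtain ⟨p, q, _, rfl⟩ := IsFractionRing.div_surjective (A := MvPolynomial G L) y
  exact div_mem (hp _) (hp _)

theorem KK_fin [Fintype G] [Algebra.IsSeparable k L] [FiniteDimensional k L] :
    FiniteDimensional (KK k G L) (FractionRing (MvPolynomial G L)) := by
  haveI := KK_sep (k := k) (G := G) (L := L)
  have h1 : Algebra.EssFiniteType (MvPolynomial G L) (FractionRing (MvPolynomial G L)) :=
    .of_isLocalization _ (nonZeroDivisors (MvPolynomial G L))
  have h2 : Algebra.EssFiniteType L (FractionRing (MvPolynomial G L)) := .comp _ (MvPolynomial G L) _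
  have h3 : Algebra.EssFiniteType k (FractionRing (MvPolynomial G L)) := .comp _ L _
  haveI : Algebra.EssFiniteType (KK k G L) (FractionRing (MvPolynomial G L)) := .of_comp k _ _
  exact finite_of_ess

end step1

theorem final_equiv {k E : Type} [Field k] [Field E] [Algebra k E] {n : ℕ} (t : Fin n → E)
    (ht : AlgebraicIndependent k t) (s : RatFunc E) (hs : Transcendental E s) :
    ∃ e : FractionRing (MvPolynomial (Fin (1 + n)) k) ≃+*
        IntermediateField.adjoin (IntermediateField.adjoin k (Set.range t)) {s},
      ∀ c, algebraMap (IntermediateField.adjoin (IntermediateField.adjoin k (Set.range t)) {s}) (RatFunc E)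
        (e (algebraMap k _ c)) = algebraMap k (RatFunc E) c := by
  have h1 : AlgebraicIndependent E (fun _ : Fin 1 => s) := by
    rw [algebraicIndependent_unique_type_iff]; exact hs
  have h2 := (AlgebraicIndependent.sumElim_comp ht h1)
  have h3 := h2.comp _ (finSumFinEquiv (m := 1) (n := n)).symm.injective
  have hr : Set.range ((Sum.elim (fun _ : Fin 1 => s) (algebraMap E (RatFunc E) ∘ t)) ∘
      (finSumFinEquiv (m := 1) (n := n)).symm) = {s} ∪ Set.range (algebraMap E (RatFunc E) ∘ t) := by
    rw [EquivLike.range_comp, Set.Sum.elim_range, Set.range_const]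
  have e1 := h3.aevalEquivField
  have hK : (IntermediateField.adjoin (IntermediateField.adjoin k (Set.range t)) {s}).restrictScalars k =
      IntermediateField.adjoin k (Set.range ((Sum.elim (fun _ : Fin 1 => s) (algebraMap E (RatFunc E) ∘ t)) ∘
      (finSumFinEquiv (m := 1) (n := n)).symm)) := by
    rw [hr]
    apply le_antisymm
    · intro x hx
      rw [IntermediateField.mem_restrictScalars] at hx
      have hc : ∀ c : IntermediateField.adjoin k (Set.range t), algebraMap E (RatFunc E) c ∈
          IntermediateField.adjoin k ({s} ∪ Set.range (algebraMap E (RatFunc E) ∘ t)) := by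
        intro c
        have : algebraMap E (RatFunc E) c ∈ (IntermediateField.adjoin k (Set.range t)).map
            (IsScalarTower.toAlgHom k E (RatFunc E)) := ⟨c, c.2, rfl⟩
        rw [IntermediateField.adjoin_map] at this
        refine IntermediateField.adjoin.mono _ _ _ ?_ this
        rw [Set.range_comp]
        exact Set.subset_union_right
      induction hx using IntermediateField.adjoin_induction with
      | mem x hx => exact IntermediateField.subset_adjoin _ _ (Or.inl hx)
      | algebraMap x => exact hc x
      | add x y _ _ hx hy => exact add_mem hx hy
      | inv x _ hx => exact inv_mem hx
      | mul x y _ _ hx hy => exact mul_mem hx hy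
    · rw [IntermediateField.adjoin_le_iff]
      rintro x (hx | ⟨i, rfl⟩)
      · exact IntermediateField.subset_adjoin (IntermediateField.adjoin k (Set.range t)) _ hx
      · exact IntermediateField.algebraMap_mem
          (IntermediateField.adjoin (IntermediateField.adjoin k (Set.range t)) {s})
          ⟨t i, IntermediateField.subset_adjoin _ _ ⟨i, rfl⟩⟩
  let e2 := e1.trans (IntermediateField.equivOfEq hK.symm)
  refine ⟨e2.toRingEquiv, fun c => ?_⟩
  exact congrArg Subtype.val (e2.commutes c)

theorem statement_9 (k : Type) [Field k] (G : Type) [Group G] [Finite G]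
    (L : Type) [Field L] [Algebra k L] [FiniteDimensional k L] [Algebra.IsSeparable k L]
    (α : G →* (L ≃ₐ[k] L)) (hα : Function.Surjective α) :
    ∃ (n : ℕ), 0 < n ∧
      ∃ (ι : L →ₐ[k] AlgebraicClosure (FractionRing (MvPolynomial (Fin n) k)))
        (E : IntermediateField (FractionRing (MvPolynomial (Fin n) k))
          (AlgebraicClosure (FractionRing (MvPolynomial (Fin n) k))))
        (hE : Set.range ι ⊆ (E : Set (AlgebraicClosure (FractionRing (MvPolynomial (Fin n) k))))),
        FiniteDimensional (FractionRing (MvPolynomial (Fin n) k)) E ∧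
        Algebra.IsSeparable (FractionRing (MvPolynomial (Fin n) k)) E ∧
        (∀ z : AlgebraicClosure (FractionRing (MvPolynomial (Fin n) k)),
          z ∈ E → IsAlgebraic k z → z ∈ Set.range ι) ∧
        ∃ β : (E ≃ₐ[FractionRing (MvPolynomial (Fin n) k)] E) ≃* G,
          ∀ (σ : E ≃ₐ[FractionRing (MvPolynomial (Fin n) k)] E) (x : L),
            ((σ ⟨ι x, hE (Set.mem_range_self x)⟩ : E)
                : AlgebraicClosure (FractionRing (MvPolynomial (Fin n) k))) =
              ι (α (β σ) x) := by
  haveI := Fintype.ofFinite G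
  haveI := KK_sep (k := k) (G := G) (L := L)
  haveI := KK_fin (k := k) (G := G) (L := L)
  let φ : G →* (FractionRing (MvPolynomial G L) ≃ₐ[KK k G L] FractionRing (MvPolynomial G L)) :=
    (IntermediateField.fixingSubgroupEquiv (KK k G L)).toMonoidHom.comp
      ((fieldAct α).codRestrict _ (fieldAct_fix α))
  have hφ' : ∀ g x, φ g x = fieldAct α g x := fun g x => rfl
  have hφ : Function.Injective φ := by
    intro g h hgh
    apply fieldAct_injective α
    ext x : 1
    exact DFunLike.congr_fun hgh x
  obtain ⟨s, hs, hfin, hsep, β, hβ⟩ := core φ hφ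
  have hL : ∀ x : L, algebraMap L (RatFunc (FractionRing (MvPolynomial G L))) x =
      RatFunc.C (algebraMap L (FractionRing (MvPolynomial G L)) x) := fun x => by
    rw [IsScalarTower.algebraMap_apply L (FractionRing (MvPolynomial G L)), RatFunc.algebraMap_eq_C]
  obtain ⟨e, he⟩ := final_equiv (ee k G L) ee_indep s hs
  refine ⟨1 + Fintype.card G, by omega, transport α _ e he hfin hsep ?_ β ?_⟩
  · intro z hz
    have hz1 : IsAlgebraic (FractionRing (MvPolynomial G L)) z := hz.tower_top _
    obtain ⟨a, rfl⟩ : ∃ a, z = RatFunc.C a := by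
      by_contra hcon
      push Not at hcon
      exact RatFunc.transcendental_of_ne_C z (fun h => by
        obtain ⟨a, ha⟩ := h
        exact hcon a (by simp_all)) hz1
    have ha : IsAlgebraic k a := by
      rw [← RatFunc.algebraMap_eq_C] at hz
      exact (isAlgebraic_algebraMap_iff (algebraMap (FractionRing (MvPolynomial G L)) (RatFunc (FractionRing (MvPolynomial G L)))).injective).1 hz
    obtain ⟨x, rfl⟩ := algLem a (ha.tower_top L)
    exact ⟨x, hL x⟩
  · intro σ x
    rw [hL, hL]
    refine (hβ σ _).trans ?_
    rw [hφ', fieldAct_L]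
    rfl
end

section
/- Let k be a field, T an indeterminate, and y ∈ k. Set P_y(T,X) = X³ + (T−y)X + (T−y) ∈ k[T][X]. Then P_y(T,X), viewed as a polynomial in X over the rational function field k(T), is irreducible and separable, and the Galois group of its splitting field over k(T) is isomorphic to the symmetric group S₃. -/
set_option synthInstance.maxHeartbeats 1000000
set_option maxHeartbeats 1000000

theorem aux_s {k : Type} [Field k] (y : k) : (RatFunc.X - RatFunc.C y : RatFunc k) =
    algebraMap (Polynomial k) (RatFunc k) (Polynomial.X - Polynomial.C y) := by
  simp

theorem aux_poly {k : Type} [Field k] (w : RatFunc k) (p : Polynomial (Polynomial k))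
    (hp : p.Monic) (h : p.eval₂ (algebraMap (Polynomial k) (RatFunc k)) w = 0) :
    ∃ a, algebraMap (Polynomial k) (RatFunc k) a = w :=
  IsIntegrallyClosed.isIntegral_iff.mp ⟨p, hp, h⟩

theorem aux_cubic {k : Type} [Field k] (y : k) (w : RatFunc k)
    (h : w ^ 3 + (RatFunc.X - RatFunc.C y) * w + (RatFunc.X - RatFunc.C y) = 0) : False := by
  rw [aux_s] at h
  set s : Polynomial k := Polynomial.X - Polynomial.C y with hs
  obtain ⟨a, rfl⟩ := aux_poly w (Polynomial.X ^ 3 + Polynomial.C s * Polynomial.X + Polynomial.C s)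
    (by monicity!) (by simpa using h)
  have h2 : a ^ 3 + s * a + s = 0 := by
    apply RatFunc.algebraMap_injective k
    simpa using h
  have hp : Prime s := Polynomial.prime_X_sub_C y
  have hd : s ∣ a := hp.dvd_of_dvd_pow (n := 3) ⟨-(a + 1), by linear_combination h2⟩
  obtain ⟨b, rfl⟩ := hd
  have h3 : s * (s ^ 2 * b ^ 3 + s * b + 1) = 0 := by linear_combination h2
  have h4 := (mul_eq_zero.mp h3).resolve_left hp.ne_zero
  have h5 := congrArg (Polynomial.eval y) h4
  simp [hs] at h5

theorem aux_quad {k : Type} [Field k] (y : k) (w : RatFunc k)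
    (h : w ^ 2 - 3 * w + ((RatFunc.X - RatFunc.C y) + 9) = 0) : False := by
  rw [aux_s] at h
  set s : Polynomial k := Polynomial.X - Polynomial.C y with hs
  have e3 : algebraMap (Polynomial k) (RatFunc k) 3 = 3 := map_ofNat _ 3
  have e9 : algebraMap (Polynomial k) (RatFunc k) 9 = 9 := map_ofNat _ 9
  obtain ⟨a, rfl⟩ := aux_poly w
    (Polynomial.X ^ 2 + Polynomial.C (-3) * Polynomial.X + Polynomial.C (s + 9))
    (by monicity!) (by
      simp only [Polynomial.eval₂_add, Polynomial.eval₂_mul, Polynomial.eval₂_pow,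
        Polynomial.eval₂_X, Polynomial.eval₂_C]
      rw [map_neg, map_add, e3, e9]
      linear_combination h)
  have h2 : a ^ 2 - 3 * a + (s + 9) = 0 := by
    apply RatFunc.algebraMap_injective k
    rw [map_add, map_sub, map_mul, map_pow, map_add, e3, e9, map_zero]
    exact h
  have h3 : a * (a - Polynomial.C 3) = -(Polynomial.X - Polynomial.C (y - 9)) := by
    simp only [map_sub, map_ofNat, hs] at *
    linear_combination h2
  have h4 := congrArg Polynomial.natDegree h3
  have hne : a * (a - Polynomial.C 3) ≠ 0 := by
    rw [h3]; exact neg_ne_zero.mpr (Polynomial.X_sub_C_ne_zero _)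
  rw [Polynomial.natDegree_mul (left_ne_zero_of_mul hne) (right_ne_zero_of_mul hne),
    Polynomial.natDegree_neg, Polynomial.natDegree_X_sub_C, Polynomial.natDegree_sub_C] at h4
  omega

theorem aux_delta {L : Type*} [Field L] (a b c s : L) (hs : s ≠ 0)
    (h1 : a + b + c = 0) (h2 : a * b + b * c + c * a = s) (h3 : a * b * c = -s) :
    ∃ w : L, w ^ 2 - 3 * w + (s + 9) = 0 := by
  refine ⟨(a ^ 2 * b + b ^ 2 * c + c ^ 2 * a) / s, ?_⟩
  have key : (a ^ 2 * b + b ^ 2 * c + c ^ 2 * a) ^ 2 - 3 * s * (a ^ 2 * b + b ^ 2 * c + c ^ 2 * a)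
      + s ^ 3 + 9 * s ^ 2 = 0 := by
    have hc : c = -a - b := by linear_combination h1
    have hs' : s = -(a * b * c) := by linear_combination h3
    subst hc
    have hA : s = -(a ^ 2 + a * b + b ^ 2) := by linear_combination -h2
    have hsum : (a ^ 2 * b + b ^ 2 * (-a - b) + (-a - b) ^ 2 * a) +
       (b ^ 2 * a + (-a - b) ^ 2 * b + a ^ 2 * (-a - b)) = 3 * s := by
      rw [hs']; ring
    have hprod : (a ^ 2 * b + b ^ 2 * (-a - b) + (-a - b) ^ 2 * a) *
       (b ^ 2 * a + (-a - b) ^ 2 * b + a ^ 2 * (-a - b)) = s ^ 3 + 9 * s ^ 2 := by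
      have e1 : s ^ 3 = (-(a ^ 2 + a * b + b ^ 2)) ^ 3 := by rw [← hA]
      have e2 : s ^ 2 = (-(a * b * (-a - b))) ^ 2 := by rw [← hs']
      rw [e1, e2]; ring
    linear_combination (a ^ 2 * b + b ^ 2 * (-a - b) + (-a - b) ^ 2 * a) * hsum - hprod
  field_simp
  linear_combination key

theorem aux_gal_s10 {K : Type*} [Field K] (s : K) (hs : s ≠ 0)
    (hc : ∀ w : K, w ^ 3 + s * w + s = 0 → False)
    (hq : ∀ w : K, w ^ 2 - 3 * w + (s + 9) = 0 → False) (P : Polynomial K)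
    (hP : P = Polynomial.X ^ 3 + Polynomial.C s * Polynomial.X + Polynomial.C s) :
    Irreducible P ∧ P.Separable ∧ Nonempty (P.Gal ≃* Equiv.Perm (Fin 3)) := by
  have hmon : P.Monic := by rw [hP]; monicity!
  have hdeg : P.natDegree = 3 := by rw [hP]; compute_degree!
  have hirr : Irreducible P := by
    refine (Polynomial.irreducible_iff_roots_eq_zero_of_degree_le_three
      (by omega) (by omega)).mpr (Multiset.eq_zero_of_forall_notMem fun w hw => ?_)
    have := Polynomial.isRoot_of_mem_roots hw
    rw [hP] at this
    exact hc w (by simpa using this)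
  have hsep : P.Separable := by
    rw [Polynomial.separable_iff_derivative_ne_zero hirr]
    intro h
    have := congrArg (Polynomial.eval 0) h
    rw [hP] at this
    simp at this
    exact hs this
  refine ⟨hirr, hsep, ?_⟩
  let L := P.SplittingField
  have hspl : (P.map (algebraMap K L)).Splits := Polynomial.SplittingField.splits P
  have hcard : Nat.card P.Gal = Module.finrank K L := Polynomial.Gal.card_of_separable hsep
  have hcr : Fintype.card (P.rootSet L) = 3 := by
    rw [Polynomial.card_rootSet_eq_natDegree hsep hspl, hdeg]
  -- roots
  have hroots : (P.map (algebraMap K L)).roots.card = 3 := by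
    rw [← hspl.natDegree_eq_card_roots, Polynomial.natDegree_map, hdeg]
  obtain ⟨a, b, c, habc⟩ := Multiset.card_eq_three.mp hroots
  have hfac : P.map (algebraMap K L) = (Polynomial.X - Polynomial.C a) *
      ((Polynomial.X - Polynomial.C b) * (Polynomial.X - Polynomial.C c)) := by
    have := hspl.eq_prod_roots_of_monic (hmon.map _)
    rw [habc] at this
    simpa using this
  have hexp : P.map (algebraMap K L) = Polynomial.X ^ 3 + Polynomial.C (algebraMap K L s) * Polynomial.X + Polynomial.C (algebraMap K L s) := by
    refine (congrArg (Polynomial.map (algebraMap K L)) hP).trans ?_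
    simp
  have hfac2 : (Polynomial.X - Polynomial.C a) *
      ((Polynomial.X - Polynomial.C b) * (Polynomial.X - Polynomial.C c)) =
      Cubic.toPoly ⟨1, -(a + b + c), a * b + b * c + c * a, -(a * b * c)⟩ := by
    simp only [Cubic.toPoly, map_neg, map_add, map_mul, map_one]; ring
  have hexp2 : P.map (algebraMap K L) = Cubic.toPoly ⟨1, 0, algebraMap K L s, algebraMap K L s⟩ := by
    rw [hexp]; simp [Cubic.toPoly]
  have hcub := (Cubic.toPoly_injective _ _).mp (hexp2.symm.trans (hfac.trans hfac2))
  simp only [Cubic.mk.injEq] at hcub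
  obtain ⟨-, e1, e2, e3⟩ := hcub
  obtain ⟨w, hw⟩ := aux_delta a b c (algebraMap K L s) (by simpa using hs)
    (by linear_combination e1) e2.symm (by linear_combination e3)
  -- divisibility
  have div (Q : Polynomial K) (hQ : Irreducible Q) (z : L) (hz : Polynomial.aeval z Q = 0) :
      Q.natDegree ∣ Module.finrank K L := by
    have hint : IsIntegral K z := Algebra.IsIntegral.isIntegral z
    have := minpoly.eq_of_irreducible hQ hz
    have h2 := congrArg Polynomial.natDegree this
    rw [Polynomial.natDegree_mul_C (by simpa using hQ.ne_zero)] at h2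
    rw [h2]
    exact minpoly.degree_dvd hint
  have d3 : 3 ∣ Module.finrank K L := by
    rw [← hdeg]
    refine div P hirr a ?_
    rw [← Polynomial.eval_map_algebraMap, hfac]; simp
  have d2 : 2 ∣ Module.finrank K L := by
    let Q : Polynomial K := Polynomial.X ^ 2 + Polynomial.C (-3) * Polynomial.X + Polynomial.C (s + 9)
    have hQd : Q.natDegree = 2 := by simp only [Q]; compute_degree!
    rw [← hQd]
    refine div Q ?_ w ?_
    · refine (Polynomial.irreducible_iff_roots_eq_zero_of_degree_le_three
        (by omega) (by omega)).mpr (Multiset.eq_zero_of_forall_notMem fun w hw => ?_)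
      have := Polynomial.isRoot_of_mem_roots hw
      refine hq w ?_
      simp only [Q, Polynomial.IsRoot, Polynomial.eval_add, Polynomial.eval_mul,
        Polynomial.eval_pow, Polynomial.eval_X, Polynomial.eval_C] at this
      linear_combination this
    · simp only [Q, map_add, map_mul, map_pow, Polynomial.aeval_X, Polynomial.aeval_C, map_neg,
        map_ofNat]
      linear_combination hw
  have d6 : 6 ∣ Nat.card P.Gal := by rw [hcard]; omega
  haveI : Fact ((P.map (algebraMap K L)).Splits) := ⟨hspl⟩
  let f := Polynomial.Gal.galActionHom P L
  have hf : Function.Injective f := Polynomial.Gal.galActionHom_injective P L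
  have hperm : Nat.card (Equiv.Perm (P.rootSet L)) = 6 := by
    rw [Nat.card_perm, Nat.card_eq_fintype_card, hcr]; rfl
  have hle : Nat.card (Equiv.Perm (P.rootSet L)) ≤ Nat.card P.Gal := by
    rw [hperm]; exact Nat.le_of_dvd Nat.card_pos d6
  have hbij : Function.Bijective f := hf.bijective_of_nat_card_le hle
  exact ⟨(MulEquiv.ofBijective f hbij).trans
    (Equiv.permCongrHom (Fintype.equivFinOfCardEq hcr))⟩




/-- For any field `k` and `y ∈ k`, the polynomial
`P_y(T,X) = X³ + (T−y)X + (T−y)`, viewed as a polynomial in `X` over the rational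
function field `k(T)`, is irreducible and separable, and the Galois group of its
splitting field over `k(T)` is isomorphic to the symmetric group `S₃`. -/
theorem statement_10 (k : Type) [Field k] (y : k) :
    Irreducible (Polynomial.X ^ 3
        + Polynomial.C (RatFunc.X - RatFunc.C y) * Polynomial.X
        + Polynomial.C (RatFunc.X - RatFunc.C y) : Polynomial (RatFunc k)) ∧
    (Polynomial.X ^ 3
        + Polynomial.C (RatFunc.X - RatFunc.C y) * Polynomial.X
        + Polynomial.C (RatFunc.X - RatFunc.C y) : Polynomial (RatFunc k)).Separable ∧
    Nonempty ((Polynomial.X ^ 3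
        + Polynomial.C (RatFunc.X - RatFunc.C y) * Polynomial.X
        + Polynomial.C (RatFunc.X - RatFunc.C y) : Polynomial (RatFunc k)).Gal
      ≃* Equiv.Perm (Fin 3)) := by
  refine aux_gal_s10 _ ?_ (aux_cubic y) (aux_quad y) _ rfl
  rw [aux_s]
  simpa only [ne_eq, map_eq_zero_iff _ (RatFunc.algebraMap_injective k)] using Polynomial.X_sub_C_ne_zero y
end

section
/- Let k be a field, T an indeterminate, and for y ∈ k set P_y(T,X) = X³ + (T−y)X + (T−y) ∈ k[T][X]. For y ∈ k, let k_y denote the field generated over k(T) by any given root of P_y(T,X) (in a fixed algebraic closure of k(T)). Then for y₁ ≠ y₂ in k, one has k_y₁ ≠ k_y₂ (for any choices of roots). -/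
set_option synthInstance.maxHeartbeats 1000000
set_option maxHeartbeats 1000000

open Polynomial in
theorem poly_contra {k : Type} [Field k] (c : k) (hc : c ≠ 0) (p q : k[X]) (hpq : IsCoprime p q)
    (h : (1 + X) * p ^ 3 + (C c * (1 + X) - X ^ 3) * (p * q ^ 2 + q ^ 3) = 0) : False := by
  have h1X : (1 + X : k[X]) ≠ 0 := by
    rw [add_comm]; exact (monic_X_add_C (1 : k)).ne_zero
  have hd1 : (1 + X : k[X]).natDegree = 1 := by
    rw [add_comm]; exact natDegree_X_add_C (1 : k)
  have hq0 : q ≠ 0 := by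
    rintro rfl
    have : p ≠ 0 := by
      rintro rfl
      exact not_isCoprime_zero_zero hpq
    simp [h1X, this] at h
  have hdvd : q ^ 2 ∣ 1 + X := by
    have : q ^ 2 ∣ (1 + X) * p ^ 3 := ⟨-((C c * (1 + X) - X ^ 3) * (p + q)), by linear_combination h⟩
    exact (hpq.symm.pow).dvd_of_dvd_mul_right this
  have hqd : q.natDegree = 0 := by
    have := natDegree_le_of_dvd hdvd h1X
    rw [natDegree_pow, hd1] at this
    omega
  obtain ⟨u, rfl⟩ := natDegree_eq_zero.1 hqd
  have hu : u ≠ 0 := by rintro rfl; simp at hq0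
  have hS : (C c * (1 + X) - X ^ 3 : k[X]).natDegree = 3 := by compute_degree!
  have hS0 : (C c * (1 + X) - X ^ 3 : k[X]) ≠ 0 := by
    intro h0; rw [h0] at hS; simp at hS
  have hp0 : p ≠ 0 := by
    rintro rfl
    have : (C c * (1 + X) - X ^ 3 : k[X]) * (C u) ^ 3 = 0 := by linear_combination h
    simp [hS0, hu] at this
  have hpu : p + C u ≠ 0 := by
    intro h0
    have : (1 + X) * p ^ 3 = 0 := by
      linear_combination h - (C c * (1 + X) - X ^ 3) * C u ^ 2 * h0
    simp [h1X, hp0] at this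
  have hdeg : 1 + 3 * p.natDegree = 3 + p.natDegree := by
    have e : (1 + X) * p ^ 3 = - ((C c * (1 + X) - X ^ 3) * ((p + C u) * C (u ^ 2))) := by
      rw [C_pow]; linear_combination h
    have e2 := congrArg natDegree e
    rw [natDegree_neg, natDegree_mul h1X (pow_ne_zero _ hp0), natDegree_pow, hd1,
      natDegree_mul hS0 (mul_ne_zero hpu (by simpa using hu)), hS,
      natDegree_mul_C (pow_ne_zero _ hu), natDegree_add_C] at e2
    exact e2
  have hp1 : p.natDegree ≤ 1 := by omega
  obtain ⟨a, b, rfl⟩ := exists_eq_X_add_C_of_natDegree_le_one hp1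
  have ha : a ≠ 0 := by
    rintro rfl
    simp at hdeg
  have e : C (a^3 - a * u^2) * X^4 + C (a^3 + 3*a^2*b - (b+u)*u^2) * X^3
     + C (3*a^2*b + 3*a*b^2 + c*a*u^2) * X^2
     + C (3*a*b^2 + b^3 + c*u^2*(a + b+u)) * X + C (b^3 + c*u^2*(b+u)) = 0 := by
    simp only [map_add, map_sub, map_mul, map_pow, map_ofNat]
    linear_combination h
  have c4 := congrArg (fun f => coeff f 4) e
  have c3 := congrArg (fun f => coeff f 3) e
  have c2 := congrArg (fun f => coeff f 2) e
  have c1 := congrArg (fun f => coeff f 1) e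
  have c0 := congrArg (fun f => coeff f 0) e
  simp only [coeff_add, coeff_C_mul, coeff_X_pow, coeff_X, coeff_C, coeff_zero] at c4 c3 c2 c1 c0
  norm_num at c4 c3 c2 c1 c0
  have g4 : a^2 = u^2 := mul_left_cancel₀ ha (by linear_combination c4)
  have gab : b + u = a := by
    apply mul_left_cancel₀ (pow_ne_zero 2 hu)
    linear_combination c4 - c3 + c2 - c1 + c0
  have g3 : 3 * b = 0 := by
    apply mul_left_cancel₀ (pow_ne_zero 2 ha)
    linear_combination c3 + u^2 * gab - a * g4
  have : c * (a * u^2) = 0 := by linear_combination c2 - (a^2 + a*b) * g3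
  simp [hc, ha, hu] at this

open Polynomial in
theorem statement_11_aux (k : Type) [Field k] (L : Type) [Field L] [Algebra (RatFunc k) L]
    [Algebra k L] [IsScalarTower k (RatFunc k) L] (y₁ y₂ : k) (hy : y₁ ≠ y₂) (x₁ x₂ : L)
    (h₁ : x₁ ^ 3 + algebraMap (RatFunc k) L (RatFunc.X - RatFunc.C y₁) * x₁
        + algebraMap (RatFunc k) L (RatFunc.X - RatFunc.C y₁) = 0)
    (h₂ : x₂ ^ 3 + algebraMap (RatFunc k) L (RatFunc.X - RatFunc.C y₂) * x₂
        + algebraMap (RatFunc k) L (RatFunc.X - RatFunc.C y₂) = 0)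
    (hx : x₂ ∈ IntermediateField.adjoin (RatFunc k) {x₁}) : False := by
  set t : L := algebraMap (RatFunc k) L RatFunc.X with ht
  have hC : ∀ y : k, algebraMap (RatFunc k) L (RatFunc.C y) = algebraMap k L y := fun y => by
    rw [← RatFunc.algebraMap_eq_C, ← IsScalarTower.algebraMap_apply]
  simp only [map_sub, hC, ← ht] at h₁ h₂
  have hx1 : 1 + x₁ ≠ 0 := by
    intro h0
    have : (1:L) = 0 := by
      linear_combination -h₁ + (x₁^2 - x₁ + 1 + t - algebraMap k L y₁) * h0
    exact one_ne_zero this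
  have htx : t = algebraMap k L y₁ - x₁^3 / (1 + x₁) := by
    field_simp
    linear_combination h₁
  have hx1K : x₁ ∈ IntermediateField.adjoin k {x₁} := IntermediateField.mem_adjoin_simple_self k x₁
  have htK : t ∈ IntermediateField.adjoin k {x₁} := by
    rw [htx]
    exact sub_mem (IntermediateField.algebraMap_mem _ _)
      (div_mem (pow_mem hx1K 3) (add_mem (one_mem _) hx1K))
  have hpol : ∀ f : k[X], algebraMap (RatFunc k) L (algebraMap k[X] (RatFunc k) f) = aeval t f := by
    intro f
    rw [ht, aeval_algebraMap_apply]
    congr 1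
    rw [← RatFunc.algebraMap_X, aeval_algebraMap_apply, aeval_X_left_apply]
  have hT : Transcendental k x₁ := by
    intro hal
    have h1 : IsAlgebraic k t := by
      rw [htx, div_eq_mul_inv]
      exact (isAlgebraic_algebraMap _).sub ((hal.pow 3).mul (isAlgebraic_one.add hal).inv)
    obtain ⟨f, hf, hf0⟩ := h1
    rw [← hpol] at hf0
    simp [hf] at hf0
  have hx2 : x₂ ∈ IntermediateField.adjoin k {x₁} := by
    clear h₂
    induction hx using IntermediateField.adjoin_induction with
    | mem x hx => rw [Set.mem_singleton_iff.1 hx]; exact hx1K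
    | algebraMap r =>
      rw [← RatFunc.num_div_denom r, map_div₀, hpol, hpol]
      have hm : ∀ f : k[X], aeval t f ∈ IntermediateField.adjoin k {x₁} := fun f => by
        rw [aeval_eq_sum_range]
        exact sum_mem fun i _ => IntermediateField.smul_mem _ (pow_mem htK i)
      exact div_mem (hm _) (hm _)
    | add x y _ _ hx hy => exact add_mem hx hy
    | inv x _ hx => exact inv_mem hx
    | mul x y _ _ hx hy => exact mul_mem hx hy
  obtain ⟨r, s, hrs⟩ := (IntermediateField.mem_adjoin_simple_iff k x₂).1 hx2
  have ⟨p, q, hpq, hq, hpq2⟩ : ∃ p q : k[X], IsCoprime p q ∧ q ≠ 0 ∧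
      x₂ = aeval x₁ p / aeval x₁ q := by
    by_cases hs : s = 0
    · exact ⟨0, 1, isCoprime_one_right, one_ne_zero, by simp [hrs, hs]⟩
    · classical
      have hg : gcd r s ≠ 0 := fun h => hs ((gcd_eq_zero_iff _ _).1 h).2
      obtain ⟨r', hr'⟩ := gcd_dvd_left r s
      obtain ⟨s', hs'⟩ := gcd_dvd_right r s
      have hs'0 : s' ≠ 0 := by rintro rfl; exact hs (by simpa using hs')
      refine ⟨r', s', ?_, hs'0, ?_⟩
      · have := isCoprime_div_gcd_div_gcd (p := r) (q := s) hs
        rwa [← EuclideanDomain.eq_div_of_mul_eq_right hg hr'.symm,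
          ← EuclideanDomain.eq_div_of_mul_eq_right hg hs'.symm] at this
      · have hga : aeval x₁ (gcd r s) ≠ 0 := fun h => hg ((transcendental_iff.1 hT) _ h)
        rw [hrs]
        have e1 := congrArg (aeval x₁) hr'
        have e2 := congrArg (aeval x₁) hs'
        rw [map_mul] at e1 e2
        rw [e1, e2, mul_div_mul_left _ _ hga]
  have hqa : aeval x₁ q ≠ 0 := fun h => hq ((transcendental_iff.1 hT) _ h)
  refine poly_contra (y₁ - y₂) (sub_ne_zero.2 hy) p q hpq ((transcendental_iff.1 hT) _ ?_)
  simp only [map_add, map_mul, map_sub, map_pow, map_one, aeval_X, aeval_C]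
  rw [hpq2, htx] at h₂
  field_simp at h₂
  linear_combination h₂

/-- For `y ∈ k`, let `k_y = k(T)(x)` be the field generated over `k(T)` by any root `x`
of `P_y(T,X) = X³ + (T−y)X + (T−y)` in a fixed algebraic closure of `k(T)`.  Then for
`y₁ ≠ y₂` in `k` one has `k_{y₁} ≠ k_{y₂}`, for any choices of roots. -/
theorem statement_11 (k : Type) [Field k] (y₁ y₂ : k) (hy : y₁ ≠ y₂)
    (x₁ x₂ : AlgebraicClosure (RatFunc k))
    (h₁ : x₁ ^ 3
        + algebraMap (RatFunc k) (AlgebraicClosure (RatFunc k))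
            (RatFunc.X - RatFunc.C y₁) * x₁
        + algebraMap (RatFunc k) (AlgebraicClosure (RatFunc k))
            (RatFunc.X - RatFunc.C y₁) = 0)
    (h₂ : x₂ ^ 3
        + algebraMap (RatFunc k) (AlgebraicClosure (RatFunc k))
            (RatFunc.X - RatFunc.C y₂) * x₂
        + algebraMap (RatFunc k) (AlgebraicClosure (RatFunc k))
            (RatFunc.X - RatFunc.C y₂) = 0) :
    IntermediateField.adjoin (RatFunc k) {x₁} ≠ IntermediateField.adjoin (RatFunc k) {x₂} := by
  intro h
  refine statement_11_aux k _ y₁ y₂ hy x₁ x₂ h₁ h₂ ?_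
  rw [h]
  exact IntermediateField.mem_adjoin_simple_self _ _
end

section
/- Let k be a field, Y = (Y₁,…,Y_m) a tuple of algebraically independent indeterminates over k, and k₀ a finite separable extension of k(Y) with k₀ = k(Y, y) for some y ∈ k₀. Let Z and T be further indeterminates, let N be a finite Galois extension of k₀(Z), let x be a root of the polynomial P_y(T,X) = X³ + (T−y)X + (T−y) in an algebraic closure of N(T), and set E = N(T,x). Then Aut(E/k(Z,Y,T)) = Gal(E/k₀(Z,T,x)): an automorphism of E fixes k(Z,Y,T) pointwise if and only if it fixes k₀(Z,T,x) pointwise. -/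
set_option synthInstance.maxHeartbeats 1000000
set_option maxHeartbeats 1000000


theorem aux_poly_s12 {N : Type*} [Field N] (p q : Polynomial N) (c : N) (hq : q.Monic)
    (hp : p ≠ 0) (hpq : IsCoprime p q)
    (h : (p ^ 3 - 3 * p ^ 2 * q - q ^ 3) * Polynomial.X =
      (Polynomial.X ^ 3 - 3 * Polynomial.X ^ 2 - 1 + Polynomial.C c * Polynomial.X) *
        (q ^ 2 * p)) : q = 1 ∧ p = Polynomial.X ∧ c = 0 := by
  have c1 : IsCoprime q (p ^ 3 - 3 * p ^ 2 * q - q ^ 3) := by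
    have : p ^ 3 - 3 * p ^ 2 * q - q ^ 3 = p ^ 3 + q * (-3 * p ^ 2 - q ^ 2) := by ring
    rw [this]
    exact (IsCoprime.pow_right hpq.symm).add_mul_left_right _
  have c2 : IsCoprime p (p ^ 3 - 3 * p ^ 2 * q - q ^ 3) := by
    have : p ^ 3 - 3 * p ^ 2 * q - q ^ 3 = - q ^ 3 + p * (p ^ 2 - 3 * p * q) := by ring
    rw [this]
    exact ((IsCoprime.pow_right hpq).neg_right).add_mul_left_right _
  have c3 : IsCoprime (q ^ 2 * p) (p ^ 3 - 3 * p ^ 2 * q - q ^ 3) := (c1.pow_left).mul_left c2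
  have d1 : q ^ 2 * p ∣ Polynomial.X := c3.dvd_of_dvd_mul_left (h ▸ Dvd.intro_left _ rfl)
  have c4 : IsCoprime (Polynomial.X : Polynomial N)
      (Polynomial.X ^ 3 - 3 * Polynomial.X ^ 2 - 1 + Polynomial.C c * Polynomial.X) :=
    ⟨Polynomial.X ^ 2 - 3 * Polynomial.X + Polynomial.C c, -1, by ring⟩
  have d2 : Polynomial.X ∣ q ^ 2 * p := c4.dvd_of_dvd_mul_left (h ▸ Dvd.intro_left _ rfl)
  have hd := Polynomial.natDegree_le_of_dvd d1 Polynomial.X_ne_zero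
  rw [Polynomial.natDegree_mul (pow_ne_zero _ hq.ne_zero) hp, Polynomial.natDegree_pow,
    Polynomial.natDegree_X] at hd
  have hq1 : q = 1 := Polynomial.eq_one_of_monic_natDegree_zero hq (by omega)
  subst hq1
  simp only [one_pow, one_mul, mul_one] at *
  obtain ⟨r, rfl⟩ := d2
  have hr : r ≠ 0 := by rintro rfl; simp at hp
  rw [Polynomial.natDegree_mul Polynomial.X_ne_zero hr, Polynomial.natDegree_X] at hd
  obtain ⟨a, rfl⟩ := Polynomial.natDegree_eq_zero.mp (show r.natDegree = 0 by omega)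
  have ha : a ≠ 0 := by rintro rfl; simp at hr
  have h' : (Polynomial.C a ^ 3 * Polynomial.X ^ 3 - 3 * Polynomial.C a ^ 2 * Polynomial.X ^ 2 - 1) =
      (Polynomial.X ^ 3 - 3 * Polynomial.X ^ 2 - 1 + Polynomial.C c * Polynomial.X) *
        Polynomial.C a := by
    apply mul_right_cancel₀ (Polynomial.X_ne_zero (R := N))
    linear_combination h
  have e0 := congrArg (Polynomial.eval 0) h'
  simp at e0
  subst e0
  have e1 : Polynomial.C c * Polynomial.X = (0 : Polynomial N) := by
    simp only [Polynomial.C_1] at h'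
    linear_combination -h'
  simpa using e1

theorem aux_rat {N : Type*} [Field N] (v : RatFunc N) (c : N) (hv : v ≠ 0)
    (h : v ^ 2 - 3 * v - v⁻¹ =
      RatFunc.X ^ 2 - 3 * RatFunc.X - (RatFunc.X)⁻¹ + RatFunc.C c) :
    v = RatFunc.X ∧ c = 0 := by
  have hn : v.num ≠ 0 := RatFunc.num_ne_zero hv
  have hd : v.denom ≠ 0 := v.denom_ne_zero
  have key := aux_poly_s12 v.num v.denom c v.monic_denom hn v.isCoprime_num_denom (by
    apply RatFunc.algebraMap_injective N
    have hn' := RatFunc.algebraMap_ne_zero hn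
    have hd' := RatFunc.algebraMap_ne_zero hd
    have hX := RatFunc.X_ne_zero (K := N)
    rw [← RatFunc.num_div_denom v] at h
    simp only [map_mul, map_sub, map_add, map_pow, RatFunc.algebraMap_X, RatFunc.algebraMap_C,
      map_one, map_ofNat]
    generalize algebraMap _ (RatFunc N) v.num = p at *
    generalize algebraMap _ (RatFunc N) v.denom = q at *
    field_simp at h
    linear_combination h)
  obtain ⟨h1, h2, h3⟩ := key
  refine ⟨?_, h3⟩
  rw [← RatFunc.num_div_denom v, h1, h2]
  simp

theorem aux_key {N E : Type*} [Field N] [Field E] (L : RatFunc N →+* E) (x : E) (y : N)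
    (hgen : ∀ S : Subfield E, (∀ r, L r ∈ S) → x ∈ S → S = ⊤)
    (hx : x ^ 3 + (L RatFunc.X - L (RatFunc.C y)) * x + (L RatFunc.X - L (RatFunc.C y)) = 0)
    (σ : E →+* E) (hT : σ (L RatFunc.X) = L RatFunc.X)
    (p : Polynomial N) (hp : p ≠ 0)
    (hpy : p.eval₂ (L.comp RatFunc.C) (σ (L (RatFunc.C y))) = 0) :
    σ (L (RatFunc.C y)) = L (RatFunc.C y) ∧ σ x = x := by
  let _ : Algebra N E := (L.comp RatFunc.C).toAlgebra
  have hu : x + 1 ≠ 0 := by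
    intro h
    have : x = -1 := by linear_combination h
    subst this
    have : (-1 : E) = 0 := by linear_combination hx
    simp at this
  have hTx : L RatFunc.X = L (RatFunc.C y) - x ^ 3 * (x + 1)⁻¹ := by
    field_simp
    linear_combination hx
  let LA : RatFunc N →ₐ[N] E := { L with commutes' := fun r => rfl }
  have htr : Transcendental N (x + 1) := by
    intro hal
    have halx : IsAlgebraic N x := by simpa using hal.sub (isAlgebraic_one (R := N))
    have : IsAlgebraic N (LA RatFunc.X) := by
      show IsAlgebraic N (L RatFunc.X)
      rw [hTx]
      exact (isAlgebraic_algebraMap (A := E) y).sub ((halx.pow 3).mul hal.inv)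
    rw [isAlgebraic_algHom_iff LA LA.toRingHom.injective] at this
    exact RatFunc.transcendental_X this
  let φ : Polynomial N →+* E := (Polynomial.aeval (R := N) (x + 1)).toRingHom
  have hφ : Function.Injective φ := transcendental_iff_injective.mp htr
  let g : RatFunc N →+* E :=
    RatFunc.liftRingHom φ (nonZeroDivisors_le_comap_nonZeroDivisors_of_injective _ hφ)
  have gX : g RatFunc.X = x + 1 := by
    rw [RatFunc.liftRingHom_X]; simp [φ]
  have gC : ∀ c, g (RatFunc.C c) = L (RatFunc.C c) := by
    intro c
    rw [RatFunc.liftRingHom_C]; simp [φ]; rfl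
  have gx : x ∈ g.fieldRange := by
    have h1 : x + 1 ∈ g.fieldRange := ⟨_, gX⟩
    simpa using sub_mem h1 (one_mem _)
  have hmem : ∀ c, L (RatFunc.C c) ∈ g.fieldRange := fun c => ⟨_, gC c⟩
  have gT : L RatFunc.X ∈ g.fieldRange := by
    rw [hTx]
    exact sub_mem (hmem y) (mul_mem (pow_mem gx 3) (inv_mem ⟨_, gX⟩))
  have hpol : ∀ P : Polynomial N, L (algebraMap _ _ P) ∈ g.fieldRange := by
    intro P
    induction P using Polynomial.induction_on' with
    | add p q hp hq => rw [map_add, map_add]; exact add_mem hp hq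
    | monomial n a =>
      rw [← Polynomial.C_mul_X_pow_eq_monomial]
      simp only [map_mul, map_pow, RatFunc.algebraMap_C, RatFunc.algebraMap_X]
      exact mul_mem (hmem a) (pow_mem gT n)
  have gsurj : g.fieldRange = ⊤ := by
    refine hgen _ (fun r => ?_) gx
    rw [← RatFunc.num_div_denom r, map_div₀]
    exact div_mem (hpol _) (hpol _)
  obtain ⟨w, hw⟩ : σ (L (RatFunc.C y)) ∈ g.fieldRange := by rw [gsurj]; trivial
  obtain ⟨v, hv⟩ : σ (x + 1) ∈ g.fieldRange := by rw [gsurj]; trivial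
  have hwc : ∃ c, w = RatFunc.C c := by
    by_contra hne
    refine RatFunc.transcendental_of_ne_C w hne ⟨p, hp, ?_⟩
    apply g.injective
    rw [map_zero, ← hpy, ← hw, Polynomial.aeval_def, Polynomial.hom_eval₂]
    congr 1
    ext c
    exact gC c
  obtain ⟨c, rfl⟩ := hwc
  have hsx := congrArg σ hTx
  rw [hT, map_sub, map_mul, map_inv₀, map_pow, ← hv, ← hw, hTx, ← gC, ← gX] at hsx
  have hx1 : x = g (RatFunc.X - 1) := by rw [map_sub, gX, map_one]; ring
  have hx2 : σ x = g (v - 1) := by rw [map_sub, hv, map_add, map_one, map_one]; ring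
  rw [hx1, ← hx1, hx2, hx1] at hsx
  simp only [← map_pow, ← map_inv₀, ← map_mul, ← map_sub] at hsx
  have hsx := g.injective hsx
  have hv0 : v ≠ 0 := by
    rintro rfl
    rw [map_zero] at hv
    exact hu (σ.injective (by rw [← hv, map_zero]))
  have hX := RatFunc.X_ne_zero (K := N)
  have := aux_rat v (c - y) hv0 (by
    rw [map_sub]
    field_simp at hsx ⊢
    linear_combination hsx)
  obtain ⟨h1, h2⟩ := this
  have h2 : c = y := sub_eq_zero.mp h2
  subst h1 h2
  exact ⟨by rw [← hw, gC], by rw [hx2, ← hx1]⟩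

/-- **Lemma `lem:sssecIII`.**  Let `k` be a field, `Y = (Y₁,…,Y_m)` indeterminates
(with `k(Y) = FractionRing (MvPolynomial (Fin m) k)`), and `k₀` a finite separable
extension of `k(Y)` with `k₀ = k(Y, y)` for some `y ∈ k₀`.  Let `Z` and `T` be further
indeterminates (`k₀(Z) = RatFunc k₀` with `Z = RatFunc.X`, and `N(T) = RatFunc N` with
`T = RatFunc.X`), let `N` be a finite Galois extension of `k₀(Z)`, let `x` be a root of
`P_y(T,X) = X³ + (T−y)X + (T−y)` in an algebraic closure of `N(T)`, and set
`E = N(T,x) = (N(T))(x)`.  Then `Aut(E/k(Z,Y,T)) = Gal(E/k₀(Z,T,x))`: a field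
automorphism `σ` of `E` fixes pointwise the subfield `k(Z,Y,T)` generated by (the images
in `E` of) `k`, `Z`, `Y₁,…,Y_m`, `T` if and only if it fixes pointwise the subfield
`k₀(Z,T,x)` generated by (the image of) `k₀`, `Z`, `T` and `x`. -/
theorem statement_12 (k : Type) [Field k] (m : ℕ)
    (k₀ : Type) [Field k₀]
    [Algebra (FractionRing (MvPolynomial (Fin m) k)) k₀]
    [FiniteDimensional (FractionRing (MvPolynomial (Fin m) k)) k₀]
    [Algebra.IsSeparable (FractionRing (MvPolynomial (Fin m) k)) k₀]
    (y : k₀)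
    (hy : IntermediateField.adjoin (FractionRing (MvPolynomial (Fin m) k))
      ({y} : Set k₀) = ⊤)
    (N : Type) [Field N] [Algebra (RatFunc k₀) N]
    [FiniteDimensional (RatFunc k₀) N] [IsGalois (RatFunc k₀) N]
    (x : AlgebraicClosure (RatFunc N))
    (hx : x ^ 3
        + (algebraMap (RatFunc N) (AlgebraicClosure (RatFunc N)) RatFunc.X
            - algebraMap (RatFunc N) (AlgebraicClosure (RatFunc N))
                (algebraMap N (RatFunc N) (algebraMap (RatFunc k₀) N
                  (algebraMap k₀ (RatFunc k₀) y)))) * x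
        + (algebraMap (RatFunc N) (AlgebraicClosure (RatFunc N)) RatFunc.X
            - algebraMap (RatFunc N) (AlgebraicClosure (RatFunc N))
                (algebraMap N (RatFunc N) (algebraMap (RatFunc k₀) N
                  (algebraMap k₀ (RatFunc k₀) y)))) = 0) :
    -- `E = N(T,x)`
    let E : IntermediateField (RatFunc N) (AlgebraicClosure (RatFunc N)) :=
      IntermediateField.adjoin (RatFunc N) ({x} : Set (AlgebraicClosure (RatFunc N)))
    -- the canonical copy of `k₀` inside `E`
    let f₀ : k₀ →+* E :=
      (algebraMap (RatFunc N) E).comp ((algebraMap N (RatFunc N)).comp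
        ((algebraMap (RatFunc k₀) N).comp (algebraMap k₀ (RatFunc k₀))))
    -- the canonical copy of `k` inside `E`
    let fk : k →+* E :=
      f₀.comp ((algebraMap (FractionRing (MvPolynomial (Fin m) k)) k₀).comp
        ((algebraMap (MvPolynomial (Fin m) k)
          (FractionRing (MvPolynomial (Fin m) k))).comp
          (algebraMap k (MvPolynomial (Fin m) k))))
    -- the images of `Y₁,…,Y_m` inside `E`
    let yE : Fin m → E := fun i =>
      f₀ (algebraMap (FractionRing (MvPolynomial (Fin m) k)) k₀
        (algebraMap (MvPolynomial (Fin m) k) (FractionRing (MvPolynomial (Fin m) k))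
          (MvPolynomial.X i)))
    -- the image of `Z` inside `E`
    let zE : E := algebraMap (RatFunc N) E
      (algebraMap N (RatFunc N) (algebraMap (RatFunc k₀) N RatFunc.X))
    -- the image of `T` inside `E`
    let tE : E := algebraMap (RatFunc N) E RatFunc.X
    -- the element `x` of `E`
    let xE : E := ⟨x, IntermediateField.subset_adjoin (RatFunc N) {x} rfl⟩
    ∀ σ : E ≃+* E,
      (∀ a ∈ Subfield.closure (Set.range fk ∪ Set.range yE ∪ {zE, tE}), σ a = a) ↔
      (∀ a ∈ Subfield.closure (Set.range f₀ ∪ {zE, tE, xE}), σ a = a) := by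
  intro E f₀ fk yE zE tE xE σ
  constructor
  · intro h
    have hk : ∀ a, σ (fk a) = fk a := fun a =>
      h _ (Subfield.subset_closure (Or.inl (Or.inl ⟨a, rfl⟩)))
    have hY : ∀ i, σ (yE i) = yE i := fun i =>
      h _ (Subfield.subset_closure (Or.inl (Or.inr ⟨i, rfl⟩)))
    have hZ : σ zE = zE := h _ (Subfield.subset_closure (Or.inr (Or.inl rfl)))
    have hT : σ tE = tE := h _ (Subfield.subset_closure (Or.inr (Or.inr rfl)))
    have hK : (σ.toRingHom.comp f₀).comp (algebraMap (FractionRing (MvPolynomial (Fin m) k)) k₀) =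
        f₀.comp (algebraMap (FractionRing (MvPolynomial (Fin m) k)) k₀) := by
      apply IsLocalization.ringHom_ext (nonZeroDivisors (MvPolynomial (Fin m) k))
      apply MvPolynomial.ringHom_ext
      · exact hk
      · exact hY
    have hint : IsIntegral (FractionRing (MvPolynomial (Fin m) k)) y :=
      Algebra.IsIntegral.isIntegral y
    let i₀ : k₀ →+* N := (algebraMap (RatFunc k₀) N).comp (algebraMap k₀ (RatFunc k₀))
    let j : FractionRing (MvPolynomial (Fin m) k) →+* N := i₀.comp (algebraMap _ k₀)
    have hxy := aux_key (algebraMap (RatFunc N) E) xE (i₀ y) (by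
        intro S hS hxS
        rw [eq_top_iff]
        rintro ⟨z, hz⟩ -
        induction hz using IntermediateField.adjoin_induction with
        | mem z hz => obtain rfl := hz; exact hxS
        | algebraMap r => exact hS r
        | add a b ha hb h1 h2 => exact add_mem h1 h2
        | inv a ha h1 => exact inv_mem h1
        | mul a b ha hb h1 h2 => exact mul_mem h1 h2) (Subtype.ext hx) σ.toRingHom hT
        ((minpoly (FractionRing (MvPolynomial (Fin m) k)) y).map j)
        ((Polynomial.map_ne_zero_iff j.injective).mpr (minpoly.ne_zero hint)) (by
          rw [Polynomial.eval₂_map]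
          have h1 := Polynomial.hom_eval₂ (minpoly (FractionRing (MvPolynomial (Fin m) k)) y)
            (algebraMap _ k₀) (σ.toRingHom.comp f₀) y
          rw [hK, ← Polynomial.aeval_def, minpoly.aeval, map_zero] at h1
          exact h1.symm)
    obtain ⟨hy1, hx1⟩ := hxy
    have h0 : ∀ a, σ (f₀ a) = f₀ a := by
      intro a
      have ha : a ∈ IntermediateField.adjoin (FractionRing (MvPolynomial (Fin m) k))
        ({y} : Set k₀) := by rw [hy]; trivial
      induction ha using IntermediateField.adjoin_induction with
      | mem z hz => obtain rfl := hz; exact hy1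
      | algebraMap r => exact congrArg (fun φ => φ r) hK
      | add a b ha hb h1 h2 => rw [map_add, map_add, h1, h2]
      | inv a ha h1 => rw [map_inv₀, map_inv₀, h1]
      | mul a b ha hb h1 h2 => rw [map_mul, map_mul, h1, h2]
    have hle : Subfield.closure (Set.range f₀ ∪ {zE, tE, xE}) ≤
        σ.toRingHom.eqLocusField (RingHom.id E) := by
      rw [Subfield.closure_le]
      rintro a (⟨b, rfl⟩ | rfl | rfl | rfl)
      · exact h0 b
      · exact hZ
      · exact hT
      · exact hx1
    exact fun a ha => hle ha
  · intro h a ha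
    refine h a ?_
    refine (Subfield.closure_le.mpr ?_) ha
    rintro a ((⟨b, rfl⟩ | ⟨b, rfl⟩) | rfl | rfl)
    · exact Subfield.subset_closure (Or.inl ⟨_, rfl⟩)
    · exact Subfield.subset_closure (Or.inl ⟨_, rfl⟩)
    · exact Subfield.subset_closure (Or.inr (Or.inl rfl))
    · exact Subfield.subset_closure (Or.inr (Or.inr (Or.inl rfl)))
end
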